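/- arXiv:2502.11615 — 3 statements merged into one kernel-verified Lean document; each statement's English description precedes it below -/
import Mathlib

section
/- Let R_n be as above and let int Δ_{n−1} = { s ∈ (0,1)^n : Σ_{i<n} s(i) = 1 } be the open (n−1)-simplex. Then the product R_n × int Δ_{n−1}, with the supremum metric, has covering dimension (n+2)(n−1)/2. -/
/-- `[n]²`: the set of 2-element subsets of `{0, …, n-1}`. -/
abbrev Pairs (n : ℕ) := {s : Finset (Fin n) // s.card = 2}

/-- The 2-element subset `{i, j}` for `i ≠ j`. -/
def pairOf {n : ℕ} (i j : Fin n) (h : i ≠ j) : Pairs n :=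
  ⟨{i, j}, Finset.card_pair h⟩

/-- `R_n ⊆ (0,∞)^{[n]²}`. -/
def RnSet (n : ℕ) : Set (Pairs n → ℝ) :=
  {r | (∀ e, 0 < r e) ∧
    ∀ (i j k : Fin n) (hij : i ≠ j) (hjk : j ≠ k) (hik : i ≠ k),
      r (pairOf i k hik) ≤ r (pairOf i j hij) + r (pairOf j k hjk)}

/-- The open `(n-1)`-simplex: strictly positive weights summing to `1`. -/
def SimplexSet (n : ℕ) : Set (Fin n → ℝ) :=
  {s | (∀ i, 0 < s i) ∧ ∑ i, s i = 1}

/-- The covering dimension of `X` is at most `n`. -/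
def CovDimLE (X : Type*) [TopologicalSpace X] (n : ℕ) : Prop :=
  ∀ U : Set (Set X), (∀ u ∈ U, IsOpen u) → ⋃₀ U = Set.univ →
    ∃ V : Set (Set X), (∀ v ∈ V, IsOpen v) ∧ ⋃₀ V = Set.univ ∧
      (∀ v ∈ V, ∃ u ∈ U, v ⊆ u) ∧ ∀ x : X, {v ∈ V | x ∈ v}.encard ≤ (n : ℕ∞) + 1

/-- The covering dimension of a topological space. -/
noncomputable def covDim (X : Type*) [TopologicalSpace X] : ℕ∞ :=
  sInf {m : ℕ∞ | ∃ k : ℕ, m = (k : ℕ∞) ∧ CovDimLE X k}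

/-- Deleting position `j`, the labels are exactly the nonzero ones. -/
def FacetFull {d : ℕ} (f : Fin (d+1) → Fin (d+1)) (j : Fin (d+1)) : Prop :=
  (∀ k, k ≠ j → f k ≠ 0) ∧ ∀ l, l ≠ 0 → ∃ k, k ≠ j ∧ f k = l

open Classical in
theorem facet_count {d : ℕ} (f : Fin (d+1) → Fin (d+1)) :
    (if Function.Surjective f then 1 else 0 : ZMod 2) = ∑ j, if FacetFull f j then 1 else 0 := by
  split_ifs with hs
  · have hi : Function.Injective f := Finite.injective_iff_surjective.mpr hs
    obtain ⟨a, ha⟩ := hs 0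
    have : ∀ j, FacetFull f j ↔ j = a := by
      intro j
      constructor
      · rintro ⟨h1, h2⟩
        by_contra hne
        exact h1 a (fun h => hne h.symm) ha
      · rintro rfl
        refine ⟨fun k hk h => hk (hi (h.trans ha.symm)), fun l hl => ?_⟩
        obtain ⟨k, hk⟩ := hs l
        exact ⟨k, fun h => hl (by rw [← hk, h, ha]), hk⟩
    simp [this]
  · by_cases hex : ∃ a, FacetFull f a
    · obtain ⟨a, h1, h2⟩ := hex
      have ha : f a ≠ 0 := by
        intro h0
        apply hs
        intro l
        by_cases hl : l = 0
        · exact ⟨a, h0.trans hl.symm⟩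
        · obtain ⟨k, -, hk⟩ := h2 l hl
          exact ⟨k, hk⟩
      obtain ⟨b, hba, hb⟩ := h2 (f a) ha
      -- injectivity away from `a`
      have hinj : ∀ x y, x ≠ a → y ≠ a → f x = f y → x = y := by
        have hc : (Finset.univ.erase a).card = ((Finset.univ : Finset (Fin (d+1))).erase 0).card := by simp
        have him : (Finset.univ.erase a).image f = (Finset.univ : Finset (Fin (d+1))).erase 0 := by
          ext l
          simp only [Finset.mem_image, Finset.mem_erase, Finset.mem_univ, and_true]
          constructor
          · rintro ⟨k, hk, rfl⟩; exact h1 k hk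
          · intro hl; exact h2 l hl
        have := Finset.card_image_iff.mp (by rw [him, hc] : ((Finset.univ.erase a).image f).card = (Finset.univ.erase a).card)
        intro x y hx hy hxy
        exact this (by simp [hx]) (by simp [hy]) hxy
      have key : ∀ j, FacetFull f j ↔ j ∈ ({a, b} : Finset (Fin (d+1))) := by
        intro j
        simp only [Finset.mem_insert, Finset.mem_singleton]
        constructor
        · rintro ⟨g1, g2⟩
          by_contra hne
          push Not at hne
          obtain ⟨k, hk, hkj⟩ := g2 (f j) (h1 j hne.1)
          by_cases hka : k = a
          · subst hka
            exact hne.2 (hinj _ _ hne.1 hba (hkj.symm.trans hb.symm))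
          · exact hk (hinj _ _ hka hne.1 hkj)
        · rintro (rfl | rfl)
          · exact ⟨h1, h2⟩
          · refine ⟨fun k hk => ?_, fun l hl => ?_⟩
            · by_cases hka : k = a
              · rw [hka]; exact ha
              · exact h1 k hka
            · obtain ⟨k, hk, hkl⟩ := h2 l hl
              by_cases hkj : k = j
              · exact ⟨a, hba.symm, by rw [← hb, ← hkj, hkl]⟩
              · exact ⟨k, hkj, hkl⟩
      simp only [key]
      rw [Finset.sum_ite_mem, Finset.univ_inter, Finset.sum_const, Finset.card_pair hba.symm]
      decide
    · push Not at hex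
      simp [hex]

/-- The `j`-th vertex of the Kuhn simplex with base `v` and increment times `ρ`. -/
def kvtx {d : ℕ} (p : (Fin d → ℕ) × Equiv.Perm (Fin d)) (j : ℕ) : Fin d → ℕ :=
  fun i => p.1 i + if (p.2 i : ℕ) < j then 1 else 0

/-- All Kuhn simplices in the cube of side `N`. -/
def kuhn (d N : ℕ) : Finset ((Fin d → ℕ) × Equiv.Perm (Fin d)) :=
  (Fintype.piFinset fun _ => Finset.range N) ×ˢ Finset.univ

theorem mem_kuhn {d N : ℕ} (p : (Fin d → ℕ) × Equiv.Perm (Fin d)) :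
    p ∈ kuhn d N ↔ ∀ i, p.1 i < N := by
  simp [kuhn]

/-- labels of the vertices -/
def klab {d m : ℕ} (L : (Fin d → ℕ) → Fin m) (p : (Fin d → ℕ) × Equiv.Perm (Fin d)) :
    Fin (d+1) → Fin m := fun j => L (kvtx p j)

theorem facetFull_congr {d : ℕ} {f g : Fin (d+1) → Fin (d+1)} {j : Fin (d+1)}
    (h : ∀ k, k ≠ j → f k = g k) : FacetFull f j ↔ FacetFull g j := by
  unfold FacetFull
  constructor
  · rintro ⟨h1, h2⟩
    refine ⟨fun k hk => h k hk ▸ h1 k hk, fun l hl => ?_⟩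
    obtain ⟨k, hk, e⟩ := h2 l hl
    exact ⟨k, hk, (h k hk) ▸ e⟩
  · rintro ⟨h1, h2⟩
    refine ⟨fun k hk => (h k hk).symm ▸ h1 k hk, fun l hl => ?_⟩
    obtain ⟨k, hk, e⟩ := h2 l hl
    exact ⟨k, hk, (h k hk).symm ▸ e⟩

open Classical in
theorem sum_middle {d N : ℕ} (L : (Fin (d+1) → ℕ) → Fin (d+2)) (j : Fin d) :
    ∑ p ∈ kuhn (d+1) N, (if FacetFull (klab L p) j.castSucc.succ then 1 else 0 : ZMod 2) = 0 := by
  have hv : ∀ (p : (Fin (d+1) → ℕ) × Equiv.Perm (Fin (d+1))) (k : Fin (d+2)),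
      k ≠ j.castSucc.succ →
      kvtx (p.1, p.2.trans (Equiv.swap j.castSucc j.succ)) k = kvtx p k := by
    intro p k hk
    funext i
    unfold kvtx
    have hk' : (k : ℕ) ≠ j + 1 := fun h => hk (Fin.ext (by simpa using h))
    have : ((Equiv.swap j.castSucc j.succ (p.2 i) : Fin (d+1)) : ℕ) < k ↔ (p.2 i : ℕ) < k := by
      rw [Equiv.swap_apply_def]
      split_ifs with h1 h2
      · rw [h1]; simp; omega
      · rw [h2]; simp; omega
      · rfl
    simp only [Equiv.trans_apply, this]
  refine Finset.sum_involution
    (fun p _ => (p.1, p.2.trans (Equiv.swap j.castSucc j.succ))) ?_ ?_ ?_ ?_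
  · intro p hp
    have : FacetFull (klab L (p.1, p.2.trans (Equiv.swap j.castSucc j.succ))) j.castSucc.succ ↔
        FacetFull (klab L p) j.castSucc.succ := by
      apply facetFull_congr
      intro k hk
      unfold klab
      rw [hv p k hk]
    simp only [this]
    exact CharTwo.add_self_eq_zero _
  · intro p hp _ h
    have h2 := congrArg Prod.snd h
    have h3 := congrArg (fun e => e (p.2.symm j.castSucc)) h2
    simp at h3
    have := congrArg Fin.val h3
    simp at this
  · intro p hp
    rw [mem_kuhn] at hp ⊢
    exact hp
  · intro p hp
    ext i
    · rfl
    · simp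

open Classical in
theorem sum_rotate {d N : ℕ} (L : (Fin (d+1) → ℕ) → Fin (d+2)) :
    ∑ p ∈ kuhn (d+1) N with p.1 (p.2.symm 0) + 1 < N,
        (if FacetFull (klab L p) 0 then 1 else 0 : ZMod 2) =
    ∑ p ∈ kuhn (d+1) N with 0 < p.1 (p.2.symm (Fin.last d)),
        (if FacetFull (klab L p) (Fin.last (d+1)) then 1 else 0 : ZMod 2) := by
  have hrot : ∀ a : Fin (d+1), ((finRotate (d+1)).symm a) = Fin.last d ↔ a = 0 := by
    intro a
    rw [Equiv.symm_apply_eq, finRotate_last]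
  have hrot2 : ∀ a : Fin (d+1), (finRotate (d+1) a) = 0 ↔ a = Fin.last d := by
    intro a
    rw [← finRotate_last, (finRotate (d+1)).injective.eq_iff]
  have hval : ∀ a : Fin (d+1), a ≠ 0 → (((finRotate (d+1)).symm a : Fin (d+1)) : ℕ) + 1 = a := by
    intro a ha
    have := coe_finRotate_of_ne_last (i := (finRotate (d+1)).symm a) (fun h => ha ((hrot a).mp h))
    rw [← this, Equiv.apply_symm_apply]
  refine Finset.sum_bij'
    (fun p _ => ((fun i => if p.2 i = 0 then p.1 i + 1 else p.1 i), p.2.trans (finRotate (d+1)).symm))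
    (fun p _ => ((fun i => if p.2 i = Fin.last d then p.1 i - 1 else p.1 i), p.2.trans (finRotate (d+1))))
    ?_ ?_ ?_ ?_ ?_
  · intro p hp
    rw [Finset.mem_filter, mem_kuhn] at hp ⊢
    refine ⟨fun i => ?_, ?_⟩
    · dsimp only
      split_ifs with h
      · have : i = p.2.symm 0 := by rw [← h, Equiv.symm_apply_apply]
        rw [this]; exact hp.2
      · exact hp.1 i
    · simp
  · intro p hp
    rw [Finset.mem_filter, mem_kuhn] at hp ⊢
    refine ⟨fun i => ?_, ?_⟩
    · dsimp only
      have := hp.1 i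
      split_ifs with h
      · omega
      · exact this
    · have h0 : (finRotate (d+1)).symm 0 = Fin.last d := (hrot 0).mpr rfl
      have := hp.1 (p.2.symm (Fin.last d))
      have := hp.2
      simp only [Equiv.symm_trans_apply, h0, Equiv.apply_symm_apply, if_true]
      omega
  · intro p hp
    ext i
    · simp only [Equiv.trans_apply, hrot]
      split_ifs <;> simp
    · simp
  · intro p hp
    rw [Finset.mem_filter, mem_kuhn] at hp
    ext i
    · simp only [Equiv.trans_apply, hrot2]
      split_ifs with h
      · have : i = p.2.symm (Fin.last d) := by rw [← h, Equiv.symm_apply_apply]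
        have h2 := hp.2
        rw [← this] at h2
        omega
      · rfl
    · simp
  · intro p hp
    set q : (Fin (d+1) → ℕ) × Equiv.Perm (Fin (d+1)) :=
      ((fun i => if p.2 i = 0 then p.1 i + 1 else p.1 i), p.2.trans (finRotate (d+1)).symm) with hq
    have hv : ∀ k : Fin (d+1), kvtx q (k : ℕ) = kvtx p (k + 1 : ℕ) := by
      intro k
      funext i
      simp only [kvtx, hq, Equiv.trans_apply]
      by_cases h : p.2 i = 0
      · have h' := (hrot (p.2 i)).mpr h
        rw [h', h]
        have := k.2
        simp
        omega
      · have := hval _ h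
        rw [if_neg h]
        congr 1
        have : (((finRotate (d+1)).symm (p.2 i) : Fin (d+1)) : ℕ) < k ↔ (p.2 i : ℕ) < k + 1 := by omega
        simp only [this]
    have hl : ∀ k : Fin (d+1), klab L q k.castSucc = klab L p k.succ := by
      intro k
      have := hv k
      unfold klab
      rw [Fin.val_castSucc, Fin.val_succ, this]
    have : FacetFull (klab L p) 0 ↔ FacetFull (klab L q) (Fin.last (d+1)) := by
      unfold FacetFull
      constructor
      · rintro ⟨h1, h2⟩
        refine ⟨fun k hk => ?_, fun l hl' => ?_⟩
        · obtain ⟨k, rfl⟩ := Fin.exists_castSucc_eq.mpr hk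
          rw [hl]; exact h1 _ (Fin.succ_ne_zero k)
        · obtain ⟨k, hk, e⟩ := h2 l hl'
          obtain ⟨k, rfl⟩ := Fin.exists_succ_eq.mpr hk
          exact ⟨k.castSucc, Fin.castSucc_ne_last k, (hl k).trans e⟩
      · rintro ⟨h1, h2⟩
        refine ⟨fun k hk => ?_, fun l hl' => ?_⟩
        · obtain ⟨k, rfl⟩ := Fin.exists_succ_eq.mpr hk
          rw [← hl]; exact h1 _ (Fin.castSucc_ne_last k)
        · obtain ⟨k, hk, e⟩ := h2 l hl'
          obtain ⟨k, rfl⟩ := Fin.exists_castSucc_eq.mpr hk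
          exact ⟨k.succ, Fin.succ_ne_zero k, (hl k).symm.trans e⟩
    simp only [this]

open Classical in
theorem kuhn_sperner (d N : ℕ) (hN : 0 < N) (L : (Fin d → ℕ) → Fin (d+1))
    (h1 : ∀ (x : Fin d → ℕ) (i : Fin d), N ≤ x i → (i : ℕ) + 1 ≤ L x) (h0 : ∀ (x : Fin d → ℕ) (i : Fin d), x i = 0 → (L x : ℕ) ≠ i + 1) :
    ∑ p ∈ kuhn d N, (if Function.Surjective (klab L p) then 1 else 0 : ZMod 2) = 1 := by
  induction d with
  | zero =>
    have : ∀ p, Function.Surjective (klab L p) := fun p l => ⟨0, by ext; have := l.2; have := (klab L p 0).2; omega⟩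
    simp only [this, if_true, kuhn]
    simp
  | succ d ih =>
    simp only [facet_count]
    rw [Finset.sum_comm, Fin.sum_univ_succ, Fin.sum_univ_castSucc]
    simp only [sum_middle, Finset.sum_const_zero, zero_add, Fin.succ_last]
    rw [← Finset.sum_filter_add_sum_filter_not (kuhn (d+1) N) (fun p => p.1 (p.2.symm 0) + 1 < N)
      (fun p => (if FacetFull (klab L p) 0 then 1 else 0 : ZMod 2)), sum_rotate,
      ← Finset.sum_filter_add_sum_filter_not (kuhn (d+1) N) (fun p => 0 < p.1 (p.2.symm (Fin.last d)))
      (fun p => (if FacetFull (klab L p) (Fin.last (d+1)) then 1 else 0 : ZMod 2))]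
    have e1 : ∑ p ∈ kuhn (d+1) N with ¬ 0 < p.1 (p.2.symm (Fin.last d)),
        (if FacetFull (klab L p) (Fin.last (d+1)) then 1 else 0 : ZMod 2) = 0 := by
      apply Finset.sum_eq_zero
      intro p hp
      rw [Finset.mem_filter] at hp
      rw [if_neg]
      rintro ⟨-, h2⟩
      obtain ⟨k, hk, e⟩ := h2 (p.2.symm (Fin.last d)).succ (Fin.succ_ne_zero _)
      refine h0 (kvtx p k) (p.2.symm (Fin.last d)) ?_ ?_
      · have hk' : (k : ℕ) ≤ d := by
          have := k.2
          have : (k : ℕ) ≠ d + 1 := fun h => hk (Fin.ext h)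
          omega
        simp [kvtx]
        omega
      · have := congrArg Fin.val e
        simpa [klab] using this
    have e2 : ∑ p ∈ kuhn (d+1) N with ¬ p.1 (p.2.symm 0) + 1 < N,
        (if FacetFull (klab L p) 0 then 1 else 0 : ZMod 2) = 1 := by
      have hne : ∀ x : Fin d → ℕ, L (Fin.cons N x) ≠ 0 := by
        intro x h
        have := h1 (Fin.cons N x) 0 (by simp)
        rw [h] at this
        simp at this
      let L' : (Fin d → ℕ) → Fin (d+1) := fun x => (L (Fin.cons N x)).pred (hne x)
      have hL' : ∀ x, (L' x).succ = L (Fin.cons N x) := fun x => Fin.succ_pred _ _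
      have hL'v : ∀ x, ((L' x : ℕ)) + 1 = L (Fin.cons N x) := fun x => by rw [← hL', Fin.val_succ]
      refine Eq.trans ?_ (ih L' ?_ ?_)
      · symm
        refine Finset.sum_of_injOn
          (fun p => (Fin.cons (N-1) p.1, Equiv.Perm.decomposeFin.symm (0, p.2))) ?_ ?_ ?_ ?_
        · intro p _ q _ h
          have ha := congrArg Prod.fst h
          have hb := congrArg Prod.snd h
          have hb' := Equiv.Perm.decomposeFin.symm.injective hb
          refine Prod.ext ?_ ?_
          · funext i; simpa using congrFun ha i.succ
          · exact (Prod.mk.inj hb').2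
        · intro p hp
          rw [Finset.mem_coe, mem_kuhn] at hp
          rw [Finset.mem_coe, Finset.mem_filter, mem_kuhn]
          refine ⟨fun i => ?_, ?_⟩
          · refine Fin.cases ?_ (fun i => ?_) i
            · simp; omega
            · simpa using hp i
          · have : (Equiv.Perm.decomposeFin.symm ((0 : Fin (d+1)), p.2)).symm 0 = 0 := by
              rw [Equiv.symm_apply_eq, Equiv.Perm.decomposeFin_symm_apply_zero]
            simp only [this, Fin.cons_zero]
            omega
        · intro p hp hnot
          rw [Finset.mem_filter, mem_kuhn] at hp
          rw [if_neg]
          rintro ⟨g1, g2⟩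
          -- the distinguished coordinate is `0`
          have hz : p.2.symm 0 = 0 := by
            by_contra hz
            obtain ⟨k, hk, e⟩ := g2 1 (by simp)
            have hx : N ≤ kvtx p k (p.2.symm 0) := by
              have : 0 < (k : ℕ) := Nat.pos_of_ne_zero (fun h => hk (Fin.ext h))
              simp [kvtx, this]
              omega
            have := h1 _ _ hx
            unfold klab at e
            rw [e] at this
            apply hz
            apply Fin.ext
            simp at this
            rw [this]
          apply hnot
          obtain ⟨⟨a, σ⟩, hσ⟩ := Equiv.Perm.decomposeFin.symm.surjective p.2
          have ha : a = 0 := by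
            rw [← Equiv.Perm.decomposeFin_symm_apply_zero a σ, hσ]
            exact ((Equiv.symm_apply_eq _).mp hz).symm
          refine ⟨(fun i => p.1 i.succ, σ), ?_, ?_⟩
          · rw [Finset.mem_coe, mem_kuhn]
            exact fun i => hp.1 i.succ
          · refine Prod.ext ?_ ?_
            · funext i
              refine Fin.cases ?_ (fun i => ?_) i
              · have ha := hp.1 0
                have hb := hp.2
                rw [hz] at hb
                simp; omega
              · simp
            · dsimp only
              rw [← ha, hσ]
        · intro p hp
          set q : (Fin (d+1) → ℕ) × Equiv.Perm (Fin (d+1)) :=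
            (Fin.cons (N-1) p.1, Equiv.Perm.decomposeFin.symm (0, p.2)) with hq
          have hv : ∀ k : Fin (d+1), klab L q k.succ = (klab L' p k).succ := by
            intro k
            unfold klab
            rw [hL']
            congr 1
            funext i
            refine Fin.cases ?_ (fun i => ?_) i
            · simp [kvtx, hq, Equiv.Perm.decomposeFin_symm_apply_zero]
              omega
            · simp [kvtx, hq, Equiv.Perm.decomposeFin_symm_apply_succ]
          have : Function.Surjective (klab L' p) ↔ FacetFull (klab L q) 0 := by
            constructor
            · intro hs
              refine ⟨fun k hk => ?_, fun l hl => ?_⟩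
              · obtain ⟨k, rfl⟩ := Fin.exists_succ_eq.mpr hk
                rw [hv]; exact Fin.succ_ne_zero _
              · obtain ⟨l, rfl⟩ := Fin.exists_succ_eq.mpr hl
                obtain ⟨k, hk⟩ := hs l
                exact ⟨k.succ, Fin.succ_ne_zero _, by rw [hv, hk]⟩
            · rintro ⟨-, g2⟩ l
              obtain ⟨k, hk, e⟩ := g2 l.succ (Fin.succ_ne_zero _)
              obtain ⟨k, rfl⟩ := Fin.exists_succ_eq.mpr hk
              rw [hv] at e
              exact ⟨k, Fin.succ_injective _ e⟩
          simp only [this]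
      · intro x i hx
        have := h1 (Fin.cons N x) i.succ (by simpa using hx)
        rw [← hL'v] at this
        simpa using this
      · intro x i hx
        have := h0 (Fin.cons N x) i.succ (by simpa using hx)
        rw [← hL'v] at this
        simpa using this
    rw [e1, e2, add_zero]
    generalize (∑ p ∈ kuhn (d+1) N with 0 < p.1 (p.2.symm (Fin.last d)),
        (if FacetFull (klab L p) (Fin.last (d+1)) then 1 else 0 : ZMod 2)) = z
    revert z
    decide

theorem exists_full (d N : ℕ) (hN : 0 < N) (L : (Fin d → ℕ) → Fin (d+1))
    (h1 : ∀ (x : Fin d → ℕ) (i : Fin d), N ≤ x i → (i : ℕ) + 1 ≤ L x) (h0 : ∀ (x : Fin d → ℕ) (i : Fin d), x i = 0 → (L x : ℕ) ≠ i + 1) :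
    ∃ p, (∀ i, p.1 i < N) ∧ Function.Surjective (klab L p) := by
  classical
  by_contra hcon
  push Not at hcon
  have := kuhn_sperner d N hN L h1 h0
  rw [Finset.sum_eq_zero] at this
  · exact absurd this (by decide)
  · intro p hp
    rw [mem_kuhn] at hp
    exact if_neg (hcon p hp)

open Topology in
theorem le_of_covDimLE {X : Type*} [TopologicalSpace X] (d k : ℕ)
    (g : ↥(Set.Icc (0 : Fin d → ℝ) 1) → X) (h : X → Fin d → ℝ) (hg : Continuous g)
    (hh : Continuous h) (hgh : ∀ t, h (g t) = t.1) (hX : CovDimLE X k) : d ≤ k := by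
  classical
  obtain ⟨V, hVo, hVc, hVr, hVn⟩ := hX (Set.range fun p => h ⁻¹' Metric.ball p (1/2))
    (by rintro _ ⟨p, rfl⟩; exact Metric.isOpen_ball.preimage hh)
    (by
      ext x
      simp only [Set.mem_sUnion, Set.mem_univ, iff_true]
      exact ⟨_, ⟨h x, rfl⟩, by simp⟩)
  obtain ⟨δ, hδ, hc⟩ := lebesgue_number_lemma_of_metric
    (s := (Set.univ : Set ↥(Set.Icc (0 : Fin d → ℝ) 1))) (c := fun v : V => g ⁻¹' v.1) isCompact_univ
    (fun v => (hVo v.1 v.2).preimage hg)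
    (by
      intro t _
      have : g t ∈ ⋃₀ V := by rw [hVc]; trivial
      obtain ⟨v, hv, ht⟩ := this
      exact Set.mem_iUnion.mpr ⟨⟨v, hv⟩, ht⟩)
  choose c hc using fun t => hc t (Set.mem_univ t)
  obtain ⟨M, hM⟩ := exists_nat_one_div_lt hδ
  set N := M + 1 with hN
  have hNpos : (0 : ℝ) < N := by rw [hN]; positivity
  -- labels
  let S : V → Finset (Fin d) := fun v =>
    Finset.univ.filter fun i => ∃ t : ↥(Set.Icc (0 : Fin d → ℝ) 1), t.1 i = 1 ∧ g t ∈ v.1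
  let lab : V → Fin (d+1) := fun v => ⟨(S v).sup fun i => (i : ℕ) + 1, by
    rw [Nat.lt_succ_iff]
    apply Finset.sup_le
    intro i _
    exact i.2⟩
  have lab1 : ∀ (v : V) t i, g t ∈ v.1 → t.1 i = 1 → (i : ℕ) + 1 ≤ lab v := by
    intro v t i hv ht
    exact Finset.le_sup (f := fun i : Fin d => (i : ℕ) + 1)
      (Finset.mem_filter.mpr ⟨Finset.mem_univ i, t, ht, hv⟩)
  have lab0 : ∀ (v : V) t i, g t ∈ v.1 → t.1 i = 0 → (lab v : ℕ) ≠ (i : ℕ) + 1 := by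
    intro v t i hv ht he
    have hne : (S v).Nonempty := by
      by_contra hem
      rw [Finset.not_nonempty_iff_eq_empty] at hem
      simp [lab, hem] at he
    obtain ⟨i', hi', e⟩ := Finset.exists_mem_eq_sup (S v) hne (fun i : Fin d => (i : ℕ) + 1)
    have hii : i' = i := by
      have : (i' : ℕ) + 1 = i + 1 := e.symm.trans he
      exact Fin.ext (by omega)
    subst hii
    obtain ⟨-, t', ht', hv'⟩ := Finset.mem_filter.mp hi'
    obtain ⟨_, ⟨p, rfl⟩, hsub⟩ := hVr v.1 v.2
    have a1 := hsub hv
    have a2 := hsub hv'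
    simp only [Set.mem_preimage, hgh, Metric.mem_ball] at a1 a2
    have b1 := (dist_le_pi_dist t.1 p i').trans_lt a1
    have b2 := (dist_le_pi_dist t'.1 p i').trans_lt a2
    rw [Real.dist_eq, abs_lt] at b1 b2
    rw [ht] at b1
    rw [ht'] at b2
    linarith [b1.1, b1.2, b2.1, b2.2]
  -- grid points
  let pt : (Fin d → ℕ) → ↥(Set.Icc (0 : Fin d → ℝ) 1) := fun x =>
    ⟨fun i => ((min (x i) N : ℕ) : ℝ) / N, by
      constructor
      · intro i; simp only [Pi.zero_apply]; positivity
      · intro i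
        simp only [Pi.one_apply]
        rw [div_le_one hNpos]
        exact_mod_cast min_le_right _ _⟩
  have hself : ∀ t, g t ∈ (c t).1 := fun t => hc t (Metric.mem_ball_self hδ)
  obtain ⟨p, hp, hfull⟩ := exists_full d N (by omega) (fun x => lab (c (pt x)))
    (by
      intro x i hx
      apply lab1 _ (pt x) i (hself _)
      simp only [pt]
      rw [min_eq_right hx]
      exact div_self hNpos.ne')
    (by
      intro x i hx
      apply lab0 _ (pt x) i (hself _)
      simp [pt, hx])
  have hdist : ∀ j : Fin (d+1), pt (kvtx p 0) ∈ Metric.ball (pt (kvtx p j)) δ := by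
    intro j
    rw [Metric.mem_ball]
    refine lt_of_le_of_lt ?_ hM
    rw [Subtype.dist_eq, dist_pi_le_iff (by positivity)]
    intro i
    have e0 : min (kvtx p 0 i) N = p.1 i := by
      have := hp i
      simp [kvtx]; omega
    have ej : min (kvtx p j i) N = p.1 i ∨ min (kvtx p j i) N = p.1 i + 1 := by
      have := hp i
      simp only [kvtx]
      split_ifs <;> omega
    simp only [pt, e0]
    have hM1 : (N : ℝ) = M + 1 := by rw [hN]; push_cast; ring
    rw [Real.dist_eq, ← sub_div, abs_div, abs_of_pos hNpos, ← hM1]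
    apply div_le_div_of_nonneg_right _ hNpos.le
    rcases ej with ej | ej <;> rw [ej] <;> simp
  choose j hj using hfull
  have hinj : Function.Injective fun l : Fin (d+1) => (c (pt (kvtx p (j l)))).1 := by
    intro a b hab
    have := Subtype.ext hab
    rw [← hj a, ← hj b]
    simp only [klab, this]
  have hle : ((d : ℕ∞) + 1) ≤ (k : ℕ∞) + 1 := by
    refine le_trans ?_ (hVn (g (pt (kvtx p 0))))
    have hr := hinj.encard_range
    rw [ENat.card_eq_coe_fintype_card, Fintype.card_fin] at hr
    have : ((d : ℕ∞) + 1) = ((d + 1 : ℕ) : ℕ∞) := by push_cast; rfl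
    rw [this]
    refine hr.trans ?_
    apply Set.encard_le_encard
    rintro _ ⟨l, rfl⟩
    exact ⟨(c _).2, hc _ (hdist (j l))⟩
  have : d + 1 ≤ k + 1 := by exact_mod_cast hle
  omega

/-- shifted dyadic cell -/
def dcell {X ι : Type*} (f : X → ι → ℝ) (k n : ℕ) (x : X) : Set X :=
  {y | ∀ i, (⌊(2:ℝ)^n * (f x i - k * √2)⌋ : ℝ) < 2^n * (f y i - k * √2) ∧
    2^n * (f y i - k * √2) < ⌊(2:ℝ)^n * (f x i - k * √2)⌋ + 1}

theorem dyadic_nested (a b : ℝ) (m r : ℕ) (h1 : (⌊(2:ℝ)^(m+r) * a⌋ : ℝ) < 2^(m+r) * b)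
    (h2 : 2^(m+r) * b < (⌊(2:ℝ)^(m+r) * a⌋ : ℝ) + 1) :
    (⌊(2:ℝ)^m * a⌋ : ℝ) < 2^m * b ∧ 2^m * b < (⌊(2:ℝ)^m * a⌋ : ℝ) + 1 := by
  set w := ⌊(2:ℝ)^m * a⌋ with hw
  have w1 : (w : ℝ) ≤ 2^m * a := Int.floor_le _
  have w2 : 2^m * a < (w : ℝ) + 1 := Int.lt_floor_add_one _
  have q0 : (0:ℝ) < 2^r := by positivity
  have z1 : 2^r * w ≤ ⌊(2:ℝ)^(m+r) * a⌋ := by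
    rw [Int.le_floor]
    push_cast
    rw [pow_add]
    nlinarith
  have z2 : ⌊(2:ℝ)^(m+r) * a⌋ + 1 ≤ 2^r * (w + 1) := by
    rw [Int.add_one_le_iff, Int.floor_lt]
    push_cast
    rw [pow_add]
    nlinarith
  have z1' : (2:ℝ)^r * w ≤ (⌊(2:ℝ)^(m+r) * a⌋ : ℝ) := by exact_mod_cast z1
  have z2' : (⌊(2:ℝ)^(m+r) * a⌋ : ℝ) + 1 ≤ (2:ℝ)^r * (w + 1) := by exact_mod_cast z2
  have e : (2:ℝ)^(m+r) * b = 2^r * (2^m * b) := by rw [pow_add]; ring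
  rw [e] at h1 h2
  constructor
  · exact lt_of_mul_lt_mul_left (z1'.trans_lt h1) q0.le
  · exact lt_of_mul_lt_mul_left (h2.trans_le z2') q0.le

theorem dcell_mono {X ι : Type*} (f : X → ι → ℝ) (k : ℕ) {m n : ℕ} (h : m ≤ n) (x : X) :
    dcell f k n x ⊆ dcell f k m x := by
  obtain ⟨r, rfl⟩ := Nat.exists_eq_add_of_le h
  intro y hy i
  exact dyadic_nested _ _ m r (hy i).1 (hy i).2

theorem dcell_eq {X ι : Type*} (f : X → ι → ℝ) (k n : ℕ) {x y : X} (h : y ∈ dcell f k n x) :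
    dcell f k n y = dcell f k n x := by
  have : ∀ i, ⌊(2:ℝ)^n * (f y i - k * √2)⌋ = ⌊(2:ℝ)^n * (f x i - k * √2)⌋ := by
    intro i
    rw [Int.floor_eq_iff]
    exact ⟨(h i).1.le, (h i).2⟩
  unfold dcell
  simp only [this]

/-- points off the shifted dyadic grid -/
def OffGrid {X ι : Type*} (f : X → ι → ℝ) (k : ℕ) (x : X) : Prop :=
  ∀ (i : ι) (n : ℕ) (z : ℤ), (2:ℝ)^n * (f x i - k * √2) ≠ z

theorem OffGrid.mem {X ι : Type*} {f : X → ι → ℝ} {k : ℕ} {x : X} (h : OffGrid f k x) (n : ℕ) :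
    x ∈ dcell f k n x := fun i =>
  ⟨lt_of_le_of_ne (Int.floor_le _) (h i n _).symm, Int.lt_floor_add_one _⟩

theorem exists_offGrid {X ι : Type*} [Fintype ι] (f : X → ι → ℝ) (x : X) :
    ∃ k ≤ Fintype.card ι, OffGrid f k x := by
  by_contra hcon
  push Not at hcon
  have : ∀ k : Fin (Fintype.card ι + 1), ∃ (i : ι) (n : ℕ) (z : ℤ),
      (2:ℝ)^n * (f x i - (k : ℕ) * √2) = z := by
    intro k
    have := hcon k (Nat.lt_succ_iff.mp k.2)
    unfold OffGrid at this
    push Not at this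
    exact this
  choose i n z hz using this
  obtain ⟨a, b, hab, e⟩ := Fintype.exists_ne_map_eq_of_card_lt i (by simp)
  have ha := hz a
  have hb := hz b
  rw [e] at ha
  have irr := irrational_sqrt_two
  apply irr
  have hne : ((a : ℕ) : ℝ) - ((b : ℕ) : ℝ) ≠ 0 := by
    intro h
    apply hab
    apply Fin.ext
    have : ((a : ℕ) : ℝ) = (b : ℕ) := by linarith
    exact_mod_cast this
  refine ⟨((z b : ℚ) / 2^(n b) - (z a : ℚ) / 2^(n a)) / ((a : ℕ) - (b : ℕ)), ?_⟩
  push_cast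
  rw [← ha, ← hb, div_eq_iff hne]
  have p1 : (2:ℝ)^(n a) ≠ 0 := by positivity
  have p2 : (2:ℝ)^(n b) ≠ 0 := by positivity
  rw [mul_div_cancel_left₀ _ p1, mul_div_cancel_left₀ _ p2]
  ring

theorem covDimLE_of_inducing {X ι : Type*} [TopologicalSpace X] [Fintype ι] (f : X → ι → ℝ)
    (hf : Topology.IsInducing f) : CovDimLE X (Fintype.card ι) := by
  classical
  intro U hUo hUc
  have hopen : ∀ k n x, IsOpen (dcell f k n x) := by
    intro k n x
    have : dcell f k n x = ⋂ i, {y | (⌊(2:ℝ)^n * (f x i - k * √2)⌋ : ℝ) < 2^n * (f y i - k * √2)} ∩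
        {y | 2^n * (f y i - k * √2) < (⌊(2:ℝ)^n * (f x i - k * √2)⌋ : ℝ) + 1} := by
      ext y; simp [dcell]
    rw [this]
    have hc : ∀ i, Continuous fun y => f y i := fun i => (continuous_apply i).comp hf.continuous
    apply isOpen_iInter_of_finite
    intro i
    have := hc i
    exact (isOpen_lt (by fun_prop) (by fun_prop)).inter (isOpen_lt (by fun_prop) (by fun_prop))
  let good : ℕ → ℕ → X → Prop := fun k n x => ∃ u ∈ U, dcell f k n x ⊆ u
  have hgood : ∀ k x, ∃ n, good k n x := by
    intro k x
    have : x ∈ ⋃₀ U := by rw [hUc]; trivial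
    obtain ⟨u, hu, hxu⟩ := this
    obtain ⟨O, hO, rfl⟩ := hf.isOpen_iff.mp (hUo u hu)
    obtain ⟨ε, hε, hball⟩ := Metric.isOpen_iff.mp hO (f x) hxu
    obtain ⟨n, hn⟩ := exists_pow_lt_of_lt_one hε (by norm_num : (1/2 : ℝ) < 1)
    refine ⟨n, _, hu, fun y hy => hball ?_⟩
    rw [Metric.mem_ball, dist_pi_lt_iff hε]
    intro i
    have h1 := (hy i).1
    have h2 := (hy i).2
    have h3 := Int.floor_le ((2:ℝ)^n * (f x i - k * √2))
    have h4 := Int.lt_floor_add_one ((2:ℝ)^n * (f x i - k * √2))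
    have hp : (0:ℝ) < 2^n := by positivity
    have hq : (1/2:ℝ)^n * 2^n = 1 := by rw [← mul_pow]; norm_num
    refine lt_trans ?_ hn
    refine lt_of_mul_lt_mul_right (a := (2:ℝ)^n) ?_ hp.le
    rw [hq, Real.dist_eq, ← abs_of_pos hp, ← abs_mul, abs_lt]
    constructor <;> linarith
  let V : Set (Set X) := {v | ∃ k ≤ Fintype.card ι, ∃ x, OffGrid f k x ∧
    v = dcell f k (Nat.find (hgood k x)) x}
  have hV : ∀ v : Set X, v ∈ V → ∃ k ≤ Fintype.card ι, ∃ x, OffGrid f k x ∧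
    v = dcell f k (Nat.find (hgood k x)) x := fun v hv => hv
  have hdisj : ∀ k x x' y, OffGrid f k x → OffGrid f k x' →
      Nat.find (hgood k x) ≤ Nat.find (hgood k x') →
      y ∈ dcell f k (Nat.find (hgood k x)) x → y ∈ dcell f k (Nat.find (hgood k x')) x' →
      dcell f k (Nat.find (hgood k x)) x = dcell f k (Nat.find (hgood k x')) x' := by
    intro k x x' y hx hx' hle hy hy'
    have e1 := dcell_eq f k _ hy
    have e2 := dcell_eq f k _ hy'
    have hm : x' ∈ dcell f k (Nat.find (hgood k x)) x := by
      rw [← e1]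
      apply dcell_mono f k hle
      rw [e2]
      exact hx'.mem _
    have e3 := dcell_eq f k _ hm
    have hg : good k (Nat.find (hgood k x)) x' := by
      obtain ⟨u, hu, hs⟩ := Nat.find_spec (hgood k x)
      exact ⟨u, hu, e3 ▸ hs⟩
    have := le_antisymm hle (Nat.find_min' (hgood k x') hg)
    rw [← this, e3]
  refine ⟨V, ?_, ?_, ?_, ?_⟩
  · rintro _ ⟨k, -, x, -, rfl⟩
    exact hopen _ _ _
  · ext x
    simp only [Set.mem_sUnion, Set.mem_univ, iff_true]
    obtain ⟨k, hk, hx⟩ := exists_offGrid f x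
    exact ⟨_, ⟨k, hk, x, hx, rfl⟩, hx.mem _⟩
  · rintro _ ⟨k, -, x, -, rfl⟩
    exact Nat.find_spec (hgood k x)
  · intro y
    haveI : Nonempty X := ⟨y⟩
    choose! κ hκ z hz hv using hV
    have hr : (↑(Finset.range (Fintype.card ι + 1)) : Set ℕ).encard = (Fintype.card ι : ℕ∞) + 1 := by
      rw [Set.encard_coe_eq_coe_finsetCard, Finset.card_range]
      push_cast; rfl
    rw [← hr]
    refine Set.encard_le_encard_of_injOn (f := κ) ?_ ?_
    · rintro v ⟨hvV, -⟩
      have := hκ v hvV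
      simp; omega
    · rintro v ⟨hvV, hy⟩ w ⟨hwV, hy'⟩ e
      have a1 := hz v hvV
      have a2 := hz w hwV
      have b1 := hv v hvV
      have b2 := hv w hwV
      rw [← e] at a2 b2
      rw [b1] at hy
      rw [b2] at hy'
      rw [b1, b2]
      rcases le_total (Nat.find (hgood (κ v) (z v))) (Nat.find (hgood (κ v) (z w))) with hle | hle
      · exact hdisj _ _ _ _ a1 a2 hle hy hy'
      · exact (hdisj _ _ _ _ a2 a1 hle hy' hy).symm

theorem card_pairs (m : ℕ) : Fintype.card (Pairs (m+1) ⊕ Fin m) = (m + 3) * m / 2 := by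
  have : Fintype.card (Pairs (m+1)) = (m+1).choose 2 := by
    have := Fintype.card_finset_len (α := Fin (m+1)) 2
    rw [Fintype.card_fin] at this
    rw [← this]
  rw [Fintype.card_sum, this, Fintype.card_fin, Nat.choose_two_right, Nat.add_sub_cancel]
  have h : (m + 3) * m = (m+1) * m + m * 2 := by ring
  rw [h, Nat.add_mul_div_right _ _ (by norm_num)]

/-- Recover a point from its free coordinates. -/
noncomputable def recov (m : ℕ) (c : Pairs (m+1) ⊕ Fin m → ℝ) :
    (Pairs (m+1) → ℝ) × (Fin (m+1) → ℝ) :=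
  (fun e => c (Sum.inl e), Fin.cons (1 - ∑ i, c (Sum.inr i)) (fun i => c (Sum.inr i)))

theorem continuous_recov (m : ℕ) : Continuous (recov m) := by
  unfold recov
  refine Continuous.prodMk (by fun_prop) ?_
  rw [continuous_pi_iff]
  intro i
  refine Fin.cases ?_ (fun i => ?_) i
  · simp only [Fin.cons_zero]; fun_prop
  · simp only [Fin.cons_succ]; fun_prop

/-- Free coordinates of a point. -/
def freeCoord (m : ℕ) (p : ↥(RnSet (m+1) ×ˢ SimplexSet (m+1))) : Pairs (m+1) ⊕ Fin m → ℝ :=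
  Sum.elim p.1.1 (fun i => p.1.2 i.succ)

theorem continuous_freeCoord (m : ℕ) : Continuous (freeCoord m) := by
  rw [continuous_pi_iff]
  rintro (e | i)
  · simp only [freeCoord, Sum.elim_inl]; fun_prop
  · simp only [freeCoord, Sum.elim_inr]; fun_prop

theorem recov_freeCoord (m : ℕ) (p : ↥(RnSet (m+1) ×ˢ SimplexSet (m+1))) :
    recov m (freeCoord m p) = p.1 := by
  obtain ⟨⟨r, s⟩, hr, hs⟩ := p
  refine Prod.ext rfl ?_
  funext i
  have h1 : ∑ i, s i = 1 := hs.2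
  rw [Fin.sum_univ_succ] at h1
  refine Fin.cases ?_ (fun i => ?_) i
  · simp [recov, freeCoord]; linarith
  · simp [recov, freeCoord]

theorem inducing_freeCoord (m : ℕ) : Topology.IsInducing (freeCoord m) := by
  refine Topology.IsInducing.of_comp (continuous_freeCoord m) (continuous_recov m) ?_
  have : recov m ∘ freeCoord m = Subtype.val := funext (recov_freeCoord m)
  rw [this]
  exact Topology.IsInducing.subtypeVal

theorem recov_mem (m : ℕ) (c : Pairs (m+1) ⊕ Fin m → ℝ) (h0 : ∀ e, 1 ≤ c (Sum.inl e))
    (h1 : ∀ e, c (Sum.inl e) ≤ 2) (h2 : ∀ i, 0 < c (Sum.inr i))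
    (h3 : ∀ i, c (Sum.inr i) * (m + 1) ≤ 1) :
    recov m c ∈ RnSet (m+1) ×ˢ SimplexSet (m+1) := by
  refine ⟨⟨fun e => ?_, ?_⟩, fun i => ?_, ?_⟩
  · simp only [recov]; linarith [h0 e]
  · intro i j k hij hjk hik
    simp only [recov]
    linarith [h1 (pairOf i k hik), h0 (pairOf i j hij), h0 (pairOf j k hjk)]
  · refine Fin.cases ?_ (fun i => ?_) i
    · simp only [recov, Fin.cons_zero]
      have hs : (∑ i, c (Sum.inr i)) * (m+1) ≤ m := by
        rw [Finset.sum_mul]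
        refine (Finset.sum_le_sum fun i _ => h3 i).trans ?_
        simp
      have hm : (0:ℝ) < m + 1 := by positivity
      nlinarith
    · simp only [recov, Fin.cons_succ]; exact h2 i
  · simp [recov, Fin.sum_univ_succ]

theorem stmt9_lower (m k : ℕ) (h : CovDimLE ↥(RnSet (m+1) ×ˢ SimplexSet (m+1)) k) :
    Fintype.card (Pairs (m+1) ⊕ Fin m) ≤ k := by
  let e := Fintype.equivFin (Pairs (m+1) ⊕ Fin m)
  have hm : (0:ℝ) < m + 1 := by positivity
  let c : (Fin (Fintype.card (Pairs (m+1) ⊕ Fin m)) → ℝ) → (Pairs (m+1) ⊕ Fin m → ℝ) := fun t =>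
    Sum.elim (fun a => 1 + t (e (Sum.inl a))) (fun i => (1 + t (e (Sum.inr i))) / (2 * (m + 1)))
  have hc : Continuous c := by
    rw [continuous_pi_iff]
    rintro (a | i)
    · simp only [c, Sum.elim_inl]; fun_prop
    · simp only [c, Sum.elim_inr]; fun_prop
  have hmem : ∀ t : ↥(Set.Icc (0 : Fin (Fintype.card (Pairs (m+1) ⊕ Fin m)) → ℝ) 1),
      recov m (c t.1) ∈ RnSet (m+1) ×ˢ SimplexSet (m+1) := by
    rintro ⟨t, h0, h1⟩
    have h0' : ∀ j, 0 ≤ t j := h0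
    have h1' : ∀ j, t j ≤ 1 := h1
    apply recov_mem
    · intro a; simp only [c, Sum.elim_inl]; linarith [h0' (e (Sum.inl a))]
    · intro a; simp only [c, Sum.elim_inl]; linarith [h1' (e (Sum.inl a))]
    · intro i; simp only [c, Sum.elim_inr]
      have := h0' (e (Sum.inr i))
      positivity
    · intro i; simp only [c, Sum.elim_inr]
      have := h1' (e (Sum.inr i))
      rw [div_mul_eq_mul_div, div_le_one (by positivity)]
      nlinarith
  let b : (Pairs (m+1) ⊕ Fin m → ℝ) → (Pairs (m+1) ⊕ Fin m → ℝ) := fun x =>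
    Sum.elim (fun a => x (Sum.inl a) - 1) (fun i => 2 * (m + 1) * x (Sum.inr i) - 1)
  have hb : Continuous b := by
    rw [continuous_pi_iff]
    rintro (a | i)
    · simp only [b, Sum.elim_inl]; fun_prop
    · simp only [b, Sum.elim_inr]; fun_prop
  refine le_of_covDimLE _ k (fun t => ⟨recov m (c t.1), hmem t⟩)
    (fun p j => b (freeCoord m p) (e.symm j)) ?_ ?_ ?_ h
  · exact ((continuous_recov m).comp (hc.comp continuous_subtype_val)).subtype_mk _
  · rw [continuous_pi_iff]
    intro j
    exact (continuous_apply (e.symm j)).comp (hb.comp (continuous_freeCoord m))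
  · intro t
    funext j
    obtain ⟨j, rfl⟩ := e.surjective j
    simp only [Equiv.symm_apply_apply]
    rcases j with a | i
    · simp [b, c, freeCoord, recov]
    · simp only [b, c, freeCoord, recov, Sum.elim_inr, Fin.cons_succ]
      field_simp
      ring

theorem stmt9 (n : ℕ) (hn : 1 ≤ n) :
    covDim ↥(RnSet n ×ˢ SimplexSet n) = (↑((n + 2) * (n - 1) / 2) : ℕ∞) := by
  obtain ⟨m, rfl⟩ : ∃ m, n = m + 1 := ⟨n - 1, by omega⟩
  have hd : (m + 1 + 2) * (m + 1 - 1) / 2 = Fintype.card (Pairs (m+1) ⊕ Fin m) := by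
    rw [card_pairs, Nat.add_sub_cancel]
  rw [hd]
  apply le_antisymm
  · exact sInf_le ⟨_, rfl, covDimLE_of_inducing _ (inducing_freeCoord m)⟩
  · apply le_sInf
    rintro _ ⟨k, rfl, hk⟩
    exact_mod_cast stmt9_lower m k hk
end

section
/- If f : X → Y is an open continuous surjection between separable metric spaces such that every fiber f⁻¹(y) is finite, then dim X = dim Y, where dim denotes covering dimension. -/
open Set Topology in
theorem CovDimLE.of_closedEmbedding {A X : Type*} [TopologicalSpace A] [TopologicalSpace X]
    {g : A → X} (hg : IsClosedEmbedding g) {n : ℕ} (h : CovDimLE X n) : CovDimLE A n := by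
  intro U hU hcov
  obtain ⟨V, hVo, hVc, hVr, hVn⟩ := h
    ({w | IsOpen w ∧ ∃ u ∈ U, g ⁻¹' w = u} ∪ {(range g)ᶜ}) (by
      rintro u (hu | rfl)
      · exact hu.1
      · exact hg.isClosed_range.isOpen_compl) (by
      rw [eq_univ_iff_forall]
      intro x
      by_cases hx : x ∈ range g
      · obtain ⟨a, rfl⟩ := hx
        have ha : a ∈ ⋃₀ U := by rw [hcov]; trivial
        obtain ⟨u, hu, hau⟩ := ha
        obtain ⟨w, hw, hwu⟩ := hg.isInducing.isOpen_iff.1 (hU u hu)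
        refine ⟨w, Or.inl ⟨hw, u, hu, hwu⟩, ?_⟩
        rw [← hwu] at hau
        exact hau
      · exact ⟨_, Or.inr rfl, hx⟩)
  refine ⟨{w | w.Nonempty ∧ ∃ v ∈ V, g ⁻¹' v = w}, ?_, ?_, ?_, ?_⟩
  · rintro w ⟨-, v, hv, rfl⟩
    exact (hVo v hv).preimage hg.continuous
  · rw [eq_univ_iff_forall]
    intro a
    have ha : g a ∈ ⋃₀ V := by rw [hVc]; trivial
    obtain ⟨v, hv, hav⟩ := ha
    exact ⟨g ⁻¹' v, ⟨⟨a, hav⟩, v, hv, rfl⟩, hav⟩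
  · rintro w ⟨⟨a, ha⟩, v, hv, rfl⟩
    obtain ⟨u, hu, hvu⟩ := hVr v hv
    rcases hu with ⟨-, u', hu', rfl⟩ | rfl
    · exact ⟨_, hu', preimage_mono hvu⟩
    · exact absurd (mem_range_self a) (hvu ha)
  · intro a
    refine le_trans ?_ (hVn (g a))
    refine le_trans (encard_le_encard ?_) (encard_image_le (fun v => g ⁻¹' v) _)
    rintro w ⟨⟨-, v, hv, rfl⟩, haw⟩
    exact ⟨v, ⟨hv, haw⟩, rfl⟩

open Set Topology in
theorem covDim_step {A X I : Type*} [TopologicalSpace A] [TopologicalSpace X] [NormalSpace X]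
    {g : A → X} (hg : IsClosedEmbedding g) {n : ℕ} (h : CovDimLE A n)
    (U : I → Set X) (hU : (∀ i, IsOpen (U i)) ∧ (⋃ i, U i) = univ ∧ ∀ x, {i | x ∈ U i}.Finite) :
    ∃ W : I → Set X, ((∀ i, IsOpen (W i)) ∧ (⋃ i, W i) = univ ∧ ∀ x, {i | x ∈ W i}.Finite) ∧
      (∀ i, closure (W i) ⊆ U i) ∧ ∀ a, {i | g a ∈ W i}.encard ≤ (n : ℕ∞) + 1 := by
  classical
  obtain ⟨hUo, hUc, hUf⟩ := hU
  obtain ⟨V, hVo, hVc, hVr, hVn⟩ := h (range fun i => g ⁻¹' (U i)) (by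
      rintro _ ⟨i, rfl⟩
      exact (hUo i).preimage hg.continuous) (by
      rw [eq_univ_iff_forall]
      intro a
      have ha : g a ∈ ⋃ i, U i := by rw [hUc]; trivial
      obtain ⟨i, hi⟩ := mem_iUnion.1 ha
      exact ⟨_, ⟨i, rfl⟩, hi⟩)
  have hVr' : ∀ v : V, ∃ i, (v : Set A) ⊆ g ⁻¹' (U i) := by
    rintro ⟨v, hv⟩
    obtain ⟨_, ⟨i, rfl⟩, hi⟩ := hVr v hv
    exact ⟨i, hi⟩
  choose c hc using hVr'
  let G : I → Set A := fun i => ⋃ v : {v : V // c v = i}, (v.1 : Set A)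
  have hGo : ∀ i, IsOpen (G i) := fun i => isOpen_iUnion fun v => hVo _ v.1.2
  let U' : I → Set X := fun i => U i \ g '' (G i)ᶜ
  have hmem : ∀ a i, g a ∈ U' i → a ∈ G i := by
    intro a i ha
    by_contra hn
    exact ha.2 ⟨a, hn, rfl⟩
  have hU'o : ∀ i, IsOpen (U' i) := fun i =>
    (hUo i).sdiff (hg.isClosedMap _ (hGo i).isClosed_compl)
  have hU'f : ∀ x, {i | x ∈ U' i}.Finite := fun x => (hUf x).subset fun i hi => hi.1
  have hU'c : (⋃ i, U' i) = univ := by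
    rw [eq_univ_iff_forall]
    intro x
    by_cases hx : x ∈ range g
    · obtain ⟨a, rfl⟩ := hx
      have ha : a ∈ ⋃₀ V := by rw [hVc]; trivial
      obtain ⟨v, hv, hav⟩ := ha
      refine mem_iUnion.2 ⟨c ⟨v, hv⟩, hc ⟨v, hv⟩ hav, ?_⟩
      rintro ⟨b, hb, hba⟩
      rw [hg.injective hba] at hb
      exact hb (mem_iUnion.2 ⟨⟨⟨v, hv⟩, rfl⟩, hav⟩)
    · have ha : x ∈ ⋃ i, U i := by rw [hUc]; trivial
      obtain ⟨i, hi⟩ := mem_iUnion.1 ha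
      refine mem_iUnion.2 ⟨i, hi, ?_⟩
      rintro ⟨b, -, rfl⟩
      exact hx ⟨b, rfl⟩
  obtain ⟨W, hWc, hWo, hW⟩ := exists_iUnion_eq_closure_subset hU'o hU'f hU'c
  have hWU : ∀ i, W i ⊆ U' i := fun i => subset_closure.trans (hW i)
  refine ⟨W, ⟨hWo, hWc, fun x => (hU'f x).subset fun i hi => hWU i hi⟩,
    fun i => (hW i).trans sdiff_subset, fun a => ?_⟩
  refine le_trans ?_ (hVn a)
  have key : {i | g a ∈ W i} ⊆ (fun v : V => c v) '' {v : V | a ∈ (v : Set A)} := by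
    intro i hi
    obtain ⟨v, hv⟩ := mem_iUnion.1 (hmem a i (hWU i hi))
    exact ⟨v.1, hv, v.2⟩
  refine (encard_le_encard key).trans ((encard_image_le _ _).trans ?_)
  rw [← Function.Injective.encard_image (Subtype.val_injective (p := fun v => v ∈ V))]
  refine encard_le_encard ?_
  rintro _ ⟨v, hv, rfl⟩
  exact ⟨v.2, hv⟩

open Set Topology in
theorem covDim_swell {X I : Type*} [MetricSpace X] (n : ℕ) (V : I → Set X)
    (hVc : ∀ i, IsClosed (V i)) (hlf : LocallyFinite V)
    (hn : ∀ x, {i | x ∈ V i}.encard ≤ (n : ℕ∞) + 1) :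
    ∃ W : I → Set X, (∀ i, IsOpen (W i)) ∧ (∀ i, V i ⊆ W i) ∧
      ∀ x, {i | x ∈ W i}.encard ≤ (n : ℕ∞) + 1 := by
  classical
  have h1 : ∀ x, ∃ r > 0, {i | (V i ∩ Metric.ball x r).Nonempty}.encard ≤ (n : ℕ∞) + 1 := by
    intro x
    have := hlf.iInter_compl_mem_nhds hVc x
    obtain ⟨r, hr, hb⟩ := Metric.mem_nhds_iff.1 this
    refine ⟨r, hr, le_trans (encard_le_encard ?_) (hn x)⟩
    rintro i ⟨y, hyV, hyb⟩
    by_contra hx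
    have := hb hyb
    simp only [mem_iInter] at this
    exact this i hx hyV
  choose r hr hrn using h1
  refine ⟨fun i => ⋃ x : V i, Metric.ball (x : X) (r x / 2),
    fun i => isOpen_iUnion fun x => Metric.isOpen_ball, fun i x hx => ?_, fun y => ?_⟩
  · exact mem_iUnion.2 ⟨⟨x, hx⟩, Metric.mem_ball_self (half_pos (hr x))⟩
  · by_contra hlt
    rw [not_le] at hlt
    have hle : ((n + 2 : ℕ) : ℕ∞) ≤ {i | y ∈ ⋃ x : V i, Metric.ball (x : X) (r x / 2)}.encard := by
      have := Order.add_one_le_of_lt hlt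
      refine le_trans (le_of_eq ?_) this
      push_cast
      rw [add_assoc, one_add_one_eq_two]
    obtain ⟨S, hS, hSc⟩ := exists_subset_encard_eq hle
    have hSf : S.Finite := finite_of_encard_eq_coe hSc
    have hSne : S.Nonempty := by
      rw [← encard_ne_zero, hSc]
      exact_mod_cast (by omega : n + 2 ≠ 0)
    have hx : ∀ i : I, ∃ x, i ∈ S → x ∈ V i ∧ dist y x < r x / 2 := by
      intro i
      by_cases hi : i ∈ S
      · obtain ⟨x, hx⟩ := mem_iUnion.1 (hS hi)
        exact ⟨x, fun _ => ⟨x.2, hx⟩⟩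
      · exact ⟨y, fun h => absurd h hi⟩
    choose p hp using hx
    obtain ⟨k, hk, hmax⟩ := exists_max_image S (fun i => r (p i)) hSf hSne
    have hsub : S ⊆ {i | (V i ∩ Metric.ball (p k) (r (p k))).Nonempty} := by
      intro i hi
      refine ⟨p i, (hp i hi).1, ?_⟩
      have h1 := (hp i hi).2
      have h2 := (hp k hk).2
      have h3 := hmax i hi
      have h4 := dist_triangle_left (p i) (p k) y
      rw [Metric.mem_ball]
      linarith
    have h5 := (encard_le_encard hsub).trans (hrn (p k))
    rw [hSc] at h5
    have h6 : n + 2 ≤ n + 1 := by exact_mod_cast h5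
    omega

open Set Topology in
theorem covDim_sum_nat {X : Type*} [MetricSpace X] {A : ℕ → Type*} [∀ j, TopologicalSpace (A j)]
    (g : ∀ j, A j → X) (hg : ∀ j, IsClosedEmbedding (g j)) (hcov : ∀ x, ∃ j, x ∈ range (g j))
    {n : ℕ} (h : ∀ j, CovDimLE (A j) n) : CovDimLE X n := by
  classical
  intro U hU hUc
  obtain ⟨U0, hU0o, hU0c, hU0lf, hU0s⟩ := precise_refinement (fun u : U => (u : Set X))
    (fun u => hU u u.2) (by rw [← sUnion_eq_iUnion, hUc])
  let P : (U → Set X) → Prop := fun W =>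
    (∀ i, IsOpen (W i)) ∧ (⋃ i, W i) = univ ∧ ∀ x, {i | x ∈ W i}.Finite
  have step : ∀ (j : ℕ) (W : {W // P W}), ∃ W' : {W // P W},
      (∀ i, closure (W'.1 i) ⊆ W.1 i) ∧ ∀ a, {i | g j a ∈ W'.1 i}.encard ≤ (n : ℕ∞) + 1 := by
    intro j W
    obtain ⟨W', h1, h2, h3⟩ := covDim_step (hg j) (h j) W.1 W.2
    exact ⟨⟨W', h1⟩, h2, h3⟩
  choose nxt hnxt1 hnxt2 using step
  let T : ℕ → {W // P W} := fun k =>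
    Nat.rec ⟨U0, hU0o, hU0c, hU0lf.point_finite⟩ (fun j W => nxt j W) k
  have hT0 : (T 0).1 = U0 := rfl
  have hTs : ∀ j, T (j + 1) = nxt j (T j) := fun j => rfl
  have hcl : ∀ j i, closure ((T (j + 1)).1 i) ⊆ (T j).1 i := fun j i => by
    rw [hTs]; exact hnxt1 j (T j) i
  have hanti : ∀ i, Antitone fun j => (T j).1 i := fun i =>
    antitone_nat_of_succ_le fun j => subset_closure.trans (hcl j i)
  let V : U → Set X := fun i => ⋂ j, closure ((T (j + 1)).1 i)
  have hVT : ∀ i j, V i ⊆ (T j).1 i := fun i j => (iInter_subset _ j).trans (hcl j i)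
  have hVcl : ∀ i, IsClosed (V i) := fun i => isClosed_iInter fun j => isClosed_closure
  have hVcov : ∀ x, ∃ i, x ∈ V i := by
    intro x
    by_contra hno
    push Not at hno
    have hex : ∀ i, ∃ j, x ∉ (T j).1 i := by
      intro i
      by_contra hall
      push Not at hall
      exact hno i (mem_iInter.2 fun j => subset_closure (hall (j + 1)))
    choose m hm using hex
    have hfin := hU0lf.point_finite x
    obtain ⟨M, hM⟩ := (hfin.image m).bddAbove
    have hx : x ∈ ⋃ i, (T M).1 i := by rw [(T M).2.2.1]; trivial
    obtain ⟨i, hi⟩ := mem_iUnion.1 hx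
    have hi0 : x ∈ U0 i := hanti i (Nat.zero_le M) hi
    exact hm i (hanti i (hM ⟨i, hi0, rfl⟩) hi)
  have hVn : ∀ x, {i | x ∈ V i}.encard ≤ (n : ℕ∞) + 1 := by
    intro x
    obtain ⟨j, a, rfl⟩ := hcov x
    refine le_trans (encard_le_encard ?_) (hnxt2 j (T j) a)
    intro i hi
    exact hVT i (j + 1) hi
  obtain ⟨W, hWo, hVW, hWn⟩ := covDim_swell n V hVcl (hU0lf.subset fun i => hVT i 0) hVn
  refine ⟨range fun i => W i ∩ i.1, ?_, ?_, ?_, ?_⟩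
  · rintro _ ⟨i, rfl⟩
    exact (hWo i).inter (hU _ i.2)
  · rw [eq_univ_iff_forall]
    intro x
    obtain ⟨i, hi⟩ := hVcov x
    exact ⟨_, ⟨i, rfl⟩, hVW i hi, hU0s i (hVT i 0 hi)⟩
  · rintro _ ⟨i, rfl⟩
    exact ⟨i.1, i.2, inter_subset_right⟩
  · intro x
    refine le_trans ?_ (hWn x)
    refine le_trans (encard_le_encard ?_) (encard_image_le (fun i : U => W i ∩ i.1) _)
    rintro _ ⟨⟨i, rfl⟩, hx⟩
    exact ⟨i, hx.1, rfl⟩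

open Set Topology in
theorem covDim_sum {X ι : Type*} [Countable ι] [MetricSpace X] {A : ι → Type*}
    [∀ j, TopologicalSpace (A j)]
    (g : ∀ j, A j → X) (hg : ∀ j, IsClosedEmbedding (g j)) (hcov : ∀ x, ∃ j, x ∈ range (g j))
    {n : ℕ} (h : ∀ j, CovDimLE (A j) n) : CovDimLE X n := by
  rcases isEmpty_or_nonempty ι with hι | hι
  · intro U _ _
    refine ⟨∅, by simp, ?_, by simp, by simp⟩
    rw [eq_univ_iff_forall]
    intro x
    obtain ⟨j, -⟩ := hcov x
    exact isEmptyElim j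
  · obtain ⟨e, he⟩ := exists_surjective_nat ι
    refine covDim_sum_nat (fun j => g (e j)) (fun j => hg _) (fun x => ?_) (fun j => h _)
    obtain ⟨j, hj⟩ := hcov x
    obtain ⟨k, rfl⟩ := he j
    exact ⟨k, hj⟩

open Set Topology in
theorem exists_closed_pieces {X Y : Type*} [MetricSpace X] [MetricSpace Y]
    [TopologicalSpace.SeparableSpace X]
    (f : X → Y) (hc : Continuous f) (ho : IsOpenMap f)
    (hfib : ∀ y : Y, (f ⁻¹' {y}).Finite) :
    ∃ (ι : Type) (_ : Countable ι) (D : ι → Set X), (∀ j, IsClosed (D j)) ∧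
      (∀ x, ∃ j, x ∈ D j) ∧ ∀ j, IsClosedEmbedding (fun x : D j => f x) := by
  classical
  have : SecondCountableTopology X := UniformSpace.secondCountable_of_separable X
  obtain ⟨B, hBc, -, hB⟩ := TopologicalSpace.exists_countable_basis X
  have : Countable B := hBc.to_subtype
  obtain ⟨e, he⟩ := exists_injective_nat B
  have hopen : ∀ U : B, IsOpen (U : Set X) := fun U => hB.isOpen U.2
  have hK : ∀ U : B, ∃ K : ℕ → Set Y, (∀ m, IsClosed (K m)) ∧ (∀ m, K m ⊆ f '' U) ∧
      (⋃ m, K m) = f '' U := fun U => by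
    obtain ⟨K, h1, h2, h3, -⟩ := (ho _ (hopen U)).exists_iUnion_isClosed
    exact ⟨K, h1, h2, h3⟩
  have hL : ∀ U : B, ∃ L : ℕ → Set X, (∀ m, IsClosed (L m)) ∧ (∀ m, L m ⊆ U) ∧
      (⋃ m, L m) = U := fun U => by
    obtain ⟨K, h1, h2, h3, -⟩ := (hopen U).exists_iUnion_isClosed
    exact ⟨K, h1, h2, h3⟩
  choose K hKc hKs hKu using hK
  choose L hLc hLs hLu using hL
  let O : B → Set Y := fun U => {y | ∃ x ∈ (U : Set X), ∃ x' ∈ (U : Set X), x ≠ x' ∧ f x = y ∧ f x' = y}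
  have hO : ∀ U, IsOpen (O U) := by
    intro U
    rw [isOpen_iff_mem_nhds]
    rintro y ⟨x, hx, x', hx', hne, hfx, hfx'⟩
    obtain ⟨P, Q, hP, hQ, hxP, hxQ, hd⟩ := t2_separation hne
    have h1 := (ho _ (hP.inter (hopen U))).mem_nhds ⟨x, ⟨hxP, hx⟩, hfx⟩
    have h2 := (ho _ (hQ.inter (hopen U))).mem_nhds ⟨x', ⟨hxQ, hx'⟩, hfx'⟩
    filter_upwards [h1, h2]
    rintro z ⟨a, ⟨haP, haU⟩, ha⟩ ⟨b, ⟨hbQ, hbU⟩, hb⟩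
    exact ⟨a, haU, b, hbU, hd.ne_of_mem haP hbQ, ha, hb⟩
  let D : B × ℕ × ℕ → Set X := fun j => L j.1 j.2.1 ∩ f ⁻¹' (K j.1 j.2.2 \ O j.1)
  have hDc : ∀ j, IsClosed (D j) := fun j =>
    (hLc _ _).inter (((hKc _ _).sdiff (hO _)).preimage hc)
  have hDcov : ∀ x, ∃ j, x ∈ D j := by
    intro x
    have hF : ((f ⁻¹' {f x}) \ {x}).Finite := (hfib (f x)).subset sdiff_subset
    obtain ⟨U, hU, hxU, hUs⟩ := hB.exists_subset_of_mem_open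
      (show x ∈ ((f ⁻¹' {f x}) \ {x})ᶜ from fun h => h.2 rfl) hF.isClosed.isOpen_compl
    have h1 : x ∈ ⋃ m, L ⟨U, hU⟩ m := by rw [hLu]; exact hxU
    have h2 : f x ∈ ⋃ m, K ⟨U, hU⟩ m := by rw [hKu]; exact ⟨x, hxU, rfl⟩
    obtain ⟨l, hl⟩ := mem_iUnion.1 h1
    obtain ⟨m, hm⟩ := mem_iUnion.1 h2
    refine ⟨(⟨U, hU⟩, l, m), hl, hm, ?_⟩
    have hu : ∀ z ∈ U, f z = f x → z = x := by
      intro z hz hfz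
      by_contra hne
      exact hUs hz ⟨hfz, hne⟩
    rintro ⟨a, ha, b, hb, hne, hfa, hfb⟩
    exact hne ((hu a ha hfa).trans (hu b hb hfb).symm)
  have hDe : ∀ j, IsClosedEmbedding (fun x : D j => f x) := by
    rintro ⟨U, l, m⟩
    refine IsClosedEmbedding.of_continuous_injective_isClosedMap
      (hc.comp continuous_subtype_val) ?_ ?_
    · rintro ⟨a, ha⟩ ⟨b, hb⟩ hab
      simp only at hab
      by_contra hne
      refine ha.2.2 ⟨a, hLs _ _ ha.1, b, hLs _ _ hb.1, fun h => hne (Subtype.ext h), rfl, hab.symm⟩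
    · intro C hC
      have hC' : IsClosed ((↑) '' C : Set X) := (hDc _).isClosedEmbedding_subtypeVal.isClosedMap _ hC
      have heq : (fun x : D (U, l, m) => f x) '' C
          = (K U m \ O U) \ f '' ((U : Set X) \ ((↑) '' C : Set X)) := by
        ext y
        constructor
        · rintro ⟨a, ha, rfl⟩
          refine ⟨a.2.2, ?_⟩
          rintro ⟨b, ⟨hbU, hbC⟩, hba⟩
          by_cases hab : b = a
          · exact hbC ⟨a, ha, hab.symm⟩
          · exact a.2.2.2 ⟨b, hbU, a, hLs _ _ a.2.1, hab, hba, rfl⟩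
        · rintro ⟨⟨hyK, hyO⟩, hy⟩
          obtain ⟨u, hu, rfl⟩ := hKs _ _ hyK
          by_cases huC : u ∈ ((↑) '' C : Set X)
          · obtain ⟨a, ha, rfl⟩ := huC
            exact ⟨a, ha, rfl⟩
          · exact absurd ⟨u, ⟨hu, huC⟩, rfl⟩ hy
      rw [heq]
      exact ((hKc _ _).sdiff (hO _)).sdiff (ho _ ((hopen U).sdiff hC'))
  let S := {k : ℕ // k ∈ range e}
  let q : S ≃ B := (Equiv.ofInjective e he).symm
  refine ⟨S × ℕ × ℕ, inferInstance, fun j => D (q j.1, j.2), fun j => hDc _, fun x => ?_,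
    fun j => hDe _⟩
  obtain ⟨⟨U, p⟩, hj⟩ := hDcov x
  refine ⟨(q.symm U, p), ?_⟩
  simpa using hj

/-- Nagami's theorem: an open continuous surjection with finite fibers between separable
metric spaces preserves covering dimension. -/
theorem stmt10 {X Y : Type*} [MetricSpace X] [MetricSpace Y]
    [TopologicalSpace.SeparableSpace X] [TopologicalSpace.SeparableSpace Y]
    (f : X → Y) (hc : Continuous f) (ho : IsOpenMap f) (hs : Function.Surjective f)
    (hfib : ∀ y : Y, (f ⁻¹' {y}).Finite) :
    covDim X = covDim Y := by
  obtain ⟨ι, hι, D, hDc, hDcov, hDe⟩ := exists_closed_pieces f hc ho hfib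
  have key : ∀ k, CovDimLE X k ↔ CovDimLE Y k := by
    intro k
    constructor
    · intro h
      refine covDim_sum (fun j (x : D j) => f x) hDe (fun y => ?_)
        fun j => CovDimLE.of_closedEmbedding (hDc j).isClosedEmbedding_subtypeVal h
      obtain ⟨x, rfl⟩ := hs y
      obtain ⟨j, hj⟩ := hDcov x
      exact ⟨j, ⟨x, hj⟩, rfl⟩
    · intro h
      refine covDim_sum (fun j (x : D j) => (x : X))
        (fun j => (hDc j).isClosedEmbedding_subtypeVal) (fun x => ?_)
        fun j => CovDimLE.of_closedEmbedding (hDe j) h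
      obtain ⟨j, hj⟩ := hDcov x
      exact ⟨j, ⟨x, hj⟩, rfl⟩
  unfold covDim
  simp only [key]
end

section
/- The space GH_{=n} of isometry classes of n-point metric spaces with the Gromov-Hausdorff distance has covering dimension n(n−1)/2. -/
section Scarf

variable {T I : Type} [Fintype T] [DecidableEq T] [Fintype I] [DecidableEq I]

/-- Dominance in the sense of Scarf. -/
def ScDom (r : I → T → ℤ) (S : Finset T) : Prop := ∀ y, ∃ i, ∀ x ∈ S, r i y ≤ r i x

theorem scarf_door_two (r : I → T → ℤ) (hr : ∀ i, Function.Injective (r i)) (s : I → T)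
    (h2 : ∀ i j t, i ≠ j → (∀ k, t ≠ s k) → r i t < r i (s j))
    (τ : Finset T) (hcard : τ.card + 1 = Fintype.card I)
    (t : T) (ht : t ∈ τ) (hts : ∀ k, t ≠ s k) (A : Finset T)
    (hA : ∀ y, y ∈ A ↔ y ∉ τ ∧ ScDom r (insert y τ)) : Even A.card := by
  classical
  rcases A.eq_empty_or_nonempty with h | ⟨y0, hy0⟩
  · simp [h]
  have hdom : ScDom r τ := by
    intro y
    obtain ⟨i, hi⟩ := ((hA y0).1 hy0).2 y
    exact ⟨i, fun x hx => hi x (Finset.mem_insert_of_mem hx)⟩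
  have hmin : ∀ i, ∃ x ∈ τ, ∀ z ∈ τ, r i x ≤ r i z := fun i =>
    Finset.exists_min_image τ (r i) ⟨t, ht⟩
  choose μ hμ hμmin using hmin
  have hsurj : ∀ x ∈ τ, ∃ i, μ i = x := by
    intro x hx
    obtain ⟨i, hi⟩ := hdom x
    exact ⟨i, hr i (le_antisymm (hμmin i x hx) (hi _ (hμ i)))⟩
  obtain ⟨a, -, b, -, hab, hμab⟩ : ∃ a ∈ (Finset.univ : Finset I), ∃ b ∈ (Finset.univ : Finset I),
      a ≠ b ∧ μ a = μ b :=
    Finset.exists_ne_map_eq_of_card_lt_of_maps_to (t := τ) (by rw [Finset.card_univ]; omega)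
      (fun i _ => hμ i)
  let M : I → Finset T := fun i => Finset.univ.filter fun z => ∀ j, j ≠ i → r j (μ j) < r j z
  have hM : ∀ i z, z ∈ M i ↔ ∀ j, j ≠ i → r j (μ j) < r j z := by intro i z; simp [M]
  have hMne : ∀ i, (M i).Nonempty := by
    intro i
    refine ⟨s i, (hM _ _).2 fun j hj => ?_⟩
    exact lt_of_le_of_lt (hμmin j t ht) (h2 j i t hj hts)
  have hmax : ∀ i, ∃ y ∈ M i, ∀ z ∈ M i, r i z ≤ r i y := fun i =>
    Finset.exists_max_image (M i) (r i) (hMne i)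
  choose m hm hmm using hmax
  have hdisj : ∀ z, z ∈ M a → z ∈ M b → False := by
    intro z ha hb
    obtain ⟨i, hi⟩ := hdom z
    have h3 := hi _ (hμ i)
    by_cases h : i = a
    · have := (hM _ _).1 hb i (by rw [h]; exact hab)
      omega
    · have := (hM _ _).1 ha i h
      omega
  have hback : ∀ i i', i ≠ i' → μ i = μ i' → m i ∈ A := by
    intro i i' hne he
    have hmi := (hM _ _).1 (hm i)
    refine (hA _).2 ⟨?_, ?_⟩
    · intro hmem
      obtain ⟨j, hj⟩ := hsurj _ hmem
      by_cases hji : j = i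
      · have := hmi i' (Ne.symm hne)
        subst hji
        rw [← he, hj] at this
        exact lt_irrefl _ this
      · have := hmi j hji
        rw [hj] at this
        exact lt_irrefl _ this
    · intro z
      by_cases hz : z ∈ M i
      · refine ⟨i, fun x hx => ?_⟩
        rcases Finset.mem_insert.1 hx with rfl | hx
        · exact hmm i z hz
        · obtain ⟨j, hj⟩ := hdom z
          by_cases hji : j = i
          · exact hji ▸ hj x hx
          · have h3 := (hM _ _).1 hz j hji
            have h4 := hj _ (hμ j)
            omega
      · rw [hM] at hz
        push Not at hz
        obtain ⟨j, hji, hj⟩ := hz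
        refine ⟨j, fun x hx => ?_⟩
        rcases Finset.mem_insert.1 hx with rfl | hx
        · exact hj.trans (hmi j hji).le
        · exact hj.trans (hμmin j x hx)
  have hfwd : ∀ y ∈ A, y = m a ∨ y = m b := by
    intro y hy
    obtain ⟨hyτ, hyd⟩ := (hA y).1 hy
    obtain ⟨i0, hi0⟩ := hyd y
    let J : Finset I := Finset.univ.filter fun i => r i (μ i) < r i y
    have hJsurj : τ ⊆ J.image μ := by
      intro x hx
      obtain ⟨i, hi⟩ := hyd x
      have hix : μ i = x :=
        hr i (le_antisymm (hμmin i x hx) (hi _ (Finset.mem_insert_of_mem (hμ i))))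
      refine Finset.mem_image.2 ⟨i, ?_, hix⟩
      have h5 := hi y (Finset.mem_insert_self _ _)
      have h6 : r i x ≠ r i y := fun h => hyτ (hr i h ▸ hx)
      simp only [J, Finset.mem_filter, Finset.mem_univ, true_and, hix]
      omega
    have hi0J : i0 ∉ J := by
      simp only [J, Finset.mem_filter, Finset.mem_univ, true_and, not_lt]
      exact hi0 _ (Finset.mem_insert_of_mem (hμ i0))
    have hc1 : τ.card ≤ (J.image μ).card := Finset.card_le_card hJsurj
    have hc2 : (J.image μ).card ≤ J.card := Finset.card_image_le
    have hJsub : J ⊆ Finset.univ.erase i0 := by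
      intro i hi
      exact Finset.mem_erase.2 ⟨fun h => hi0J (h ▸ hi), Finset.mem_univ _⟩
    have hc3 : (Finset.univ.erase i0 : Finset I).card + 1 = Fintype.card I := by
      rw [Finset.card_erase_of_mem (Finset.mem_univ _), Finset.card_univ]
      omega
    have hJ : J = Finset.univ.erase i0 := Finset.eq_of_subset_of_card_le hJsub (by omega)
    have hinj : Set.InjOn μ J := Finset.card_image_iff.1 (by
      have := Finset.card_le_card hJsub
      omega)
    have hyM : y ∈ M i0 := by
      rw [hM]
      intro j hj
      have : j ∈ J := by rw [hJ]; simp [hj]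
      simpa [J] using this
    have hymax : ∀ z ∈ M i0, r i0 z ≤ r i0 y := by
      intro z hz
      obtain ⟨i, hi⟩ := hyd z
      by_cases h : i = i0
      · exact h ▸ hi y (Finset.mem_insert_self _ _)
      · have h3 := (hM _ _).1 hz i h
        have h4 := hi _ (Finset.mem_insert_of_mem (hμ i))
        omega
    have hym : y = m i0 := hr i0 (le_antisymm (hmm i0 y hyM) (hymax _ (hm i0)))
    have : i0 = a ∨ i0 = b := by
      by_contra hcon
      push Not at hcon
      refine hab (hinj ?_ ?_ hμab)
      · rw [hJ]; simp [Ne.symm hcon.1]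
      · rw [hJ]; simp [Ne.symm hcon.2]
    rcases this with rfl | rfl
    · exact Or.inl hym
    · exact Or.inr hym
  have hAeq : A = {m a, m b} := by
    ext y
    simp only [Finset.mem_insert, Finset.mem_singleton]
    constructor
    · exact hfwd y
    · rintro (rfl | rfl)
      · exact hback a b hab hμab
      · exact hback b a hab.symm hμab.symm
  have hne : m a ≠ m b := fun h => hdisj (m a) (hm a) (h ▸ hm b)
  rw [hAeq, Finset.card_pair hne]
  exact even_two

theorem scarf_door_one (r : I → T → ℤ) (hr : ∀ i, Function.Injective (r i)) (s : I → T)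
    (h1 : ∀ i t, t ≠ s i → r i (s i) < r i t)
    (h2 : ∀ i j t, i ≠ j → (∀ k, t ≠ s k) → r i t < r i (s j))
    (t0 : T) (ht0 : ∀ k, t0 ≠ s k) (i0 : I) (A : Finset T)
    (hA : ∀ y, y ∈ A ↔ y ∉ (Finset.univ.erase i0).image s ∧
      ScDom r (insert y ((Finset.univ.erase i0).image s))) : A.card = 1 := by
  classical
  let N : Finset T := Finset.univ.filter fun z => ∀ k, z ≠ s k
  have hN : ∀ z, z ∈ N ↔ ∀ k, z ≠ s k := by intro z; simp [N]
  obtain ⟨y, hy, hymax⟩ := Finset.exists_max_image N (r i0) ⟨t0, (hN _).2 ht0⟩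
  have hmem : ∀ i, i ≠ i0 → s i ∈ (Finset.univ.erase i0).image s := fun i hi =>
    Finset.mem_image_of_mem _ (by simp [hi])
  rw [Finset.card_eq_one]
  refine ⟨y, ?_⟩
  ext w
  rw [hA, Finset.mem_singleton]
  constructor
  · rintro ⟨hw, hwd⟩
    have hwN : w ∈ N := by
      rw [hN]
      intro k hk
      obtain ⟨i, hi⟩ := hwd t0
      have hmem' : s i ∈ insert w ((Finset.univ.erase i0).image s) := by
        by_cases h : i = i0
        · have : k = i0 := by
            by_contra hne
            exact hw (hk ▸ hmem k hne)
          rw [hk, this, h]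
          exact Finset.mem_insert_self _ _
        · exact Finset.mem_insert_of_mem (hmem i h)
      exact absurd (hi _ hmem') (not_le.2 (h1 i t0 (ht0 i)))
    obtain ⟨i, hi⟩ := hwd y
    have : i = i0 := by
      by_contra h
      exact absurd (hi _ (Finset.mem_insert_of_mem (hmem i h))) (not_le.2 (h1 i y ((hN _).1 hy i)))
    subst this
    exact hr i (le_antisymm (hymax w hwN) (hi w (Finset.mem_insert_self _ _)))
  · rintro rfl
    constructor
    · intro h
      obtain ⟨k, -, hk⟩ := Finset.mem_image.1 h
      exact (hN _).1 hy k hk.symm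
    · intro z
      by_cases hz : z ∈ N
      · refine ⟨i0, fun x hx => ?_⟩
        rcases Finset.mem_insert.1 hx with rfl | hx
        · exact hymax z hz
        · obtain ⟨k, hk, rfl⟩ := Finset.mem_image.1 hx
          exact (h2 i0 k z (Ne.symm (Finset.mem_erase.1 hk).1) ((hN _).1 hz)).le
      · rw [hN] at hz
        push Not at hz
        obtain ⟨k, rfl⟩ := hz
        refine ⟨k, fun x _ => ?_⟩
        by_cases h : x = s k
        · rw [h]
        · exact (h1 k x h).le

theorem scarf_room_even (c : T → I) (i0 : I) (S : Finset T)
    (hcard : S.card = Fintype.card I) (hS : S.image c ≠ Finset.univ) (B : Finset T)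
    (hB : ∀ y, y ∈ B ↔ y ∈ S ∧ (S.erase y).image c = Finset.univ.erase i0) : Even B.card := by
  classical
  rcases B.eq_empty_or_nonempty with h | ⟨y, hy⟩
  · simp [h]
  have hinj : ∀ w ∈ B, Set.InjOn c (S.erase w : Finset T) := by
    intro w hw
    obtain ⟨hw1, hw2⟩ := (hB w).1 hw
    apply Finset.card_image_iff.1
    rw [hw2, Finset.card_erase_of_mem hw1, Finset.card_erase_of_mem (Finset.mem_univ _),
      Finset.card_univ, hcard]
  obtain ⟨hyS, hyc⟩ := (hB y).1 hy
  have hcy : c y ≠ i0 := by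
    intro h
    apply hS
    rw [← Finset.insert_erase hyS, Finset.image_insert, hyc, h,
      Finset.insert_erase (Finset.mem_univ _)]
  have : c y ∈ (S.erase y).image c := by rw [hyc]; simp [hcy]
  obtain ⟨x, hx, hxy⟩ := Finset.mem_image.1 this
  obtain ⟨hxne, hxS⟩ := Finset.mem_erase.1 hx
  have hxB : x ∈ B := by
    refine (hB x).2 ⟨hxS, ?_⟩
    rw [← hyc]
    ext i
    simp only [Finset.mem_image, Finset.mem_erase]
    constructor
    · rintro ⟨w, ⟨hwx, hwS⟩, rfl⟩
      by_cases hwy : w = y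
      · exact ⟨x, ⟨hxne, hxS⟩, by rw [hxy, hwy]⟩
      · exact ⟨w, ⟨hwy, hwS⟩, rfl⟩
    · rintro ⟨w, ⟨hwx, hwS⟩, rfl⟩
      by_cases hwy : w = x
      · exact ⟨y, ⟨hxne.symm, hyS⟩, by rw [← hxy, hwy]⟩
      · exact ⟨w, ⟨hwy, hwS⟩, rfl⟩
  have hBeq : B = {y, x} := by
    ext w
    simp only [Finset.mem_insert, Finset.mem_singleton]
    constructor
    · intro hw
      by_contra hcon
      push Not at hcon
      refine hxne (hinj w hw ?_ ?_ hxy)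
      · simp [hxS, Ne.symm hcon.2]
      · simp [hyS, Ne.symm hcon.1]
    · rintro (rfl | rfl)
      · exact hy
      · exact hxB
  rw [hBeq, Finset.card_pair hxne.symm]
  exact even_two

theorem scarf_main (r : I → T → ℤ) (hr : ∀ i, Function.Injective (r i)) (s : I → T)
    (hs : Function.Injective s)
    (h1 : ∀ i t, t ≠ s i → r i (s i) < r i t)
    (h2 : ∀ i j t, i ≠ j → (∀ k, t ≠ s k) → r i t < r i (s j))
    (t0 : T) (ht0 : ∀ k, t0 ≠ s k) (c : T → I) (hc : ∀ i, c (s i) = i) (i0 : I) :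
    ∃ S : Finset T, S.card = Fintype.card I ∧ S.image c = Finset.univ ∧ ScDom r S := by
  classical
  by_contra hcon
  push Not at hcon
  let P1 : Finset (Finset T × T) := Finset.univ.filter fun p =>
    p.1.card + 1 = Fintype.card I ∧ p.1.image c = Finset.univ.erase i0 ∧ p.2 ∉ p.1 ∧
      ScDom r (insert p.2 p.1)
  let P2 : Finset (Finset T × T) := Finset.univ.filter fun p =>
    p.1.card = Fintype.card I ∧ ScDom r p.1 ∧ p.2 ∈ p.1 ∧
      (p.1.erase p.2).image c = Finset.univ.erase i0
  have h12 : P1.card = P2.card := by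
    refine Finset.card_nbij' (fun p => (insert p.2 p.1, p.2)) (fun p => (p.1.erase p.2, p.2))
      ?_ ?_ ?_ ?_
    · rintro ⟨τ, y⟩ h
      simp only [P1, P2, Finset.coe_filter, Finset.mem_univ, true_and, Set.mem_ofPred_eq] at h ⊢
      obtain ⟨ha, hb, hd, he⟩ := h
      refine ⟨?_, he, Finset.mem_insert_self _ _, ?_⟩
      · rw [Finset.card_insert_of_notMem hd, ha]
      · rw [Finset.erase_insert hd, hb]
    · rintro ⟨S, y⟩ h
      simp only [P1, P2, Finset.coe_filter, Finset.mem_univ, true_and, Set.mem_ofPred_eq] at h ⊢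
      obtain ⟨ha, hb, hd, he⟩ := h
      refine ⟨?_, he, Finset.notMem_erase _ _, ?_⟩
      · rw [Finset.card_erase_add_one hd, ha]
      · rw [Finset.insert_erase hd]; exact hb
    · rintro ⟨τ, y⟩ h
      simp only [P1, Finset.coe_filter, Finset.mem_univ, true_and, Set.mem_ofPred_eq] at h
      simp [Finset.erase_insert h.2.2.1]
    · rintro ⟨S, y⟩ h
      simp only [P2, Finset.coe_filter, Finset.mem_univ, true_and, Set.mem_ofPred_eq] at h
      simp [Finset.insert_erase h.2.2.1]
  have hfib : ∀ (P : Finset (Finset T × T)), P.card = ∑ τ : Finset T,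
      (Finset.univ.filter fun y => (τ, y) ∈ P).card := by
    intro P
    rw [Finset.card_eq_sum_card_fiberwise (f := Prod.fst) (t := Finset.univ) (by simp)]
    refine Finset.sum_congr rfl fun τ _ => ?_
    refine Finset.card_nbij' Prod.snd (fun y => (τ, y)) ?_ ?_ ?_ ?_
    · rintro ⟨τ', y⟩ h
      simp only [Finset.coe_filter, Set.mem_ofPred_eq] at h
      obtain ⟨h, rfl⟩ := h
      simpa using h
    · intro y h
      simpa using h
    · rintro ⟨τ', y⟩ h
      simp only [Finset.coe_filter, Set.mem_ofPred_eq] at h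
      obtain ⟨h, rfl⟩ := h
      rfl
    · intro y h
      rfl
  have heven : Even P2.card := by
    rw [hfib]
    refine Finset.even_sum _ fun S _ => ?_
    by_cases hS : S.card = Fintype.card I ∧ ScDom r S
    · refine scarf_room_even c i0 S hS.1 (fun h => hcon S hS.1 h hS.2) _ fun y => ?_
      simp [P2, hS.1, hS.2]
    · have : (Finset.univ.filter fun y => (S, y) ∈ P2) = ∅ := by
        ext y
        simp only [P2, Finset.mem_filter, Finset.mem_univ, true_and, Finset.notMem_empty, iff_false]
        exact fun h => hS ⟨h.1, h.2.1⟩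
      simp [this]
  set τ0 : Finset T := (Finset.univ.erase i0).image s with hτ0
  have hτ0card : τ0.card + 1 = Fintype.card I := by
    rw [hτ0, Finset.card_image_of_injective _ hs, Finset.card_erase_add_one (Finset.mem_univ _),
      Finset.card_univ]
  have hτ0c : τ0.image c = Finset.univ.erase i0 := by
    rw [hτ0, Finset.image_image]
    have : c ∘ s = id := funext hc
    rw [this, Finset.image_id]
  have hodd : Odd P1.card := by
    rw [hfib, ← Finset.add_sum_erase _ _ (Finset.mem_univ τ0)]
    refine Odd.add_even ?_ ?_
    · rw [scarf_door_one r hr s h1 h2 t0 ht0 i0 _ ?_]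
      · exact odd_one
      · intro y
        simp only [P1, Finset.mem_filter, Finset.mem_univ, true_and, hτ0card, hτ0c]
        exact Iff.rfl
    · refine Finset.even_sum _ fun τ hτ => ?_
      by_cases hd : τ.card + 1 = Fintype.card I ∧ τ.image c = Finset.univ.erase i0
      · obtain ⟨t, ht, hts⟩ : ∃ t ∈ τ, ∀ k, t ≠ s k := by
          by_contra hno
          push Not at hno
          apply (Finset.mem_erase.1 hτ).1
          refine Finset.eq_of_subset_of_card_le ?_ (by omega)
          intro x hx
          obtain ⟨k, rfl⟩ := hno x hx
          refine Finset.mem_image_of_mem _ ?_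
          rw [← hd.2]
          exact Finset.mem_image.2 ⟨_, hx, hc k⟩
        refine scarf_door_two r hr s h2 τ hd.1 t ht hts _ fun y => ?_
        simp [P1, hd.1, hd.2]
      · have : (Finset.univ.filter fun y => (τ, y) ∈ P1) = ∅ := by
          ext y
          simp only [P1, Finset.mem_filter, Finset.mem_univ, true_and, Finset.notMem_empty,
            iff_false]
          exact fun h => hd ⟨h.1, h.2.1⟩
        simp [this]
  rw [h12] at hodd
  exact (Nat.not_even_iff_odd.2 hodd) heven

end Scarf

section Simplex

variable {I : Type} [Fintype I] [DecidableEq I]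

theorem simplex_color (m : ℕ) (c : (I → ℕ) → I) (i0 : I) :
    ∃ (σ : Finset (I → ℕ)) (C : Finset I), σ.Nonempty ∧ (∀ x ∈ σ, ∑ i, x i = m) ∧
      σ.image c = C ∧ ∀ y : I → ℕ, ∑ i, y i = m → ∃ i ∈ C, ∀ x ∈ σ, y i ≤ x i := by
  classical
  let G : Type := {x : I → Fin (m + 1) // ∑ i, (x i : ℕ) = m}
  let K : ℕ := Fintype.card G
  let e : G ≃ Fin K := Fintype.equivFin G
  let idx : I ≃ Fin (Fintype.card I) := Fintype.equivFin I
  let val : G → I → ℕ := fun x i => (x.1 i : ℕ)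
  have hval : ∀ y : I → ℕ, ∑ i, y i = m → ∃ g : G, val g = y := by
    intro y hy
    have hle : ∀ i, y i < m + 1 := fun i => by
      have := Finset.single_le_sum (f := y) (fun i _ => Nat.zero_le _) (Finset.mem_univ i)
      omega
    exact ⟨⟨fun i => ⟨y i, hle i⟩, hy⟩, rfl⟩
  let r : I → G ⊕ I → ℤ := fun i t => match t with
    | Sum.inl x => (val x i : ℤ) * K + (e x : ℕ)
    | Sum.inr j => if j = i then -1 else ((m : ℤ) + 1) * K + (idx j : ℕ)
  have hrl : ∀ i x, r i (Sum.inl x) = (val x i : ℤ) * K + (e x : ℕ) := fun _ _ => rfl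
  have hrr : ∀ i j, r i (Sum.inr j) = if j = i then -1 else ((m : ℤ) + 1) * K + (idx j : ℕ) :=
    fun _ _ => rfl
  have hlt : ∀ i x, r i (Sum.inl x) < ((m : ℤ) + 1) * K := by
    intro i x
    rw [hrl]
    have h1 : (val x i : ℤ) ≤ m := by exact_mod_cast Nat.lt_succ_iff.1 (x.1 i).2
    have h2 : ((e x : ℕ) : ℤ) < K := by exact_mod_cast (e x).2
    nlinarith
  have hnn : ∀ i x, 0 ≤ r i (Sum.inl x) := by
    intro i x
    rw [hrl]
    positivity
  have hord : ∀ i x y, r i (Sum.inl x) ≤ r i (Sum.inl y) → val x i ≤ val y i := by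
    intro i x y h
    rw [hrl, hrl] at h
    by_contra hcon
    push Not at hcon
    have h1 : (val y i : ℤ) + 1 ≤ val x i := by exact_mod_cast hcon
    have h2 : ((e y : ℕ) : ℤ) < K := by exact_mod_cast (e y).2
    have h3 : (0 : ℤ) ≤ ((e x : ℕ) : ℤ) := by positivity
    nlinarith
  have hidx : ∀ j, (0 : ℤ) ≤ ((idx j : ℕ) : ℤ) := fun j => by positivity
  have hKnn : (0 : ℤ) ≤ ((m : ℤ) + 1) * K := by positivity
  have hr : ∀ i, Function.Injective (r i) := by
    intro i
    rintro (x | j) (y | k) h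
    · have h1 : val x i = val y i := le_antisymm (hord i x y h.le) (hord i y x h.ge)
      rw [hrl, hrl, h1] at h
      have h2 : (e x : ℕ) = (e y : ℕ) := by exact_mod_cast add_left_cancel h
      rw [e.injective (Fin.ext h2)]
    · have h1 := hlt i x
      have h2 := hnn i x
      rw [h, hrr] at h1 h2
      have := hidx k
      split_ifs at h1 h2 <;> omega
    · have h1 := hlt i y
      have h2 := hnn i y
      rw [← h, hrr] at h1 h2
      have := hidx j
      split_ifs at h1 h2 <;> omega
    · rw [hrr, hrr] at h
      have h3 := hidx j
      have h4 := hidx k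
      split_ifs at h with h1 h2 h2
      · rw [h1, h2]
      · omega
      · omega
      · have h2 : (idx j : ℕ) = (idx k : ℕ) := by exact_mod_cast add_left_cancel h
        rw [idx.injective (Fin.ext h2)]
  obtain ⟨g0, -⟩ := hval (fun i => if i = i0 then m else 0) (by simp)
  obtain ⟨S, -, hSc, hSd⟩ := scarf_main r hr (Sum.inr : I → G ⊕ I) Sum.inr_injective
    (by
      rintro i (x | j) ht
      · have := hnn i x
        rw [hrr, if_pos rfl]; omega
      · have hji : j ≠ i := fun h => ht (by rw [h])
        rw [hrr, hrr, if_pos rfl, if_neg hji]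
        have := hidx j
        omega)
    (by
      rintro i j (x | k) hij ht
      · have := hlt i x
        have := hidx j
        rw [hrr, if_neg (Ne.symm hij)]; omega
      · exact absurd rfl (ht k))
    (Sum.inl g0) (by simp) (Sum.elim (fun g => c (val g)) id) (by simp) i0
  let σ : Finset (I → ℕ) := (Finset.univ.filter fun g : G => Sum.inl g ∈ S).image val
  have hσ : ∀ x, x ∈ σ ↔ ∃ g : G, Sum.inl g ∈ S ∧ val g = x := by
    intro x; simp [σ]
  have hdom : ∀ y : I → ℕ, ∑ i, y i = m → ∃ i, Sum.inr i ∉ S ∧ ∀ x ∈ σ, y i ≤ x i := by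
    intro y hy
    obtain ⟨g, rfl⟩ := hval y hy
    obtain ⟨i, hi⟩ := hSd (Sum.inl g)
    refine ⟨i, fun hmem => ?_, ?_⟩
    · have h1 := hi _ hmem
      have := hnn i g
      rw [hrr, if_pos rfl] at h1
      omega
    · intro x hx
      obtain ⟨g', hg', rfl⟩ := (hσ x).1 hx
      exact hord i g g' (hi _ hg')
  have hcol : ∀ i, Sum.inr i ∉ S → ∃ x ∈ σ, c x = i := by
    intro i hi
    have : i ∈ S.image (Sum.elim (fun g => c (val g)) id) := by rw [hSc]; exact Finset.mem_univ _
    obtain ⟨t, ht, hti⟩ := Finset.mem_image.1 this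
    rcases t with g | j
    · exact ⟨val g, (hσ _).2 ⟨g, ht, rfl⟩, hti⟩
    · simp only [Sum.elim_inr, id] at hti
      exact absurd (hti ▸ ht) hi
  refine ⟨σ, σ.image c, ?_, ?_, rfl, ?_⟩
  · obtain ⟨i, hi, -⟩ := hdom (fun i => if i = i0 then m else 0) (by simp)
    obtain ⟨x, hx, -⟩ := hcol i hi
    exact ⟨x, hx⟩
  · intro x hx
    obtain ⟨g, -, rfl⟩ := (hσ x).1 hx
    exact g.2
  · intro y hy
    obtain ⟨i, hi, hle⟩ := hdom y hy
    obtain ⟨x, hx, rfl⟩ := hcol i hi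
    exact ⟨c x, Finset.mem_image_of_mem _ hx, hle⟩

theorem simplex_color' (m : ℕ) (c : (I → ℕ) → I) (i0 : I) :
    ∃ (σ : Finset (I → ℕ)), σ.Nonempty ∧ (∀ x ∈ σ, ∑ i, x i = m) ∧
      (∀ x ∈ σ, ∀ j ∉ σ.image c, x j ≤ Fintype.card I) ∧
      ∀ x ∈ σ, ∀ x' ∈ σ, ∀ i, x i ≤ x' i + Fintype.card I := by
  classical
  obtain ⟨σ, C, hne, hsum, rfl, hdom⟩ := simplex_color m c i0
  have hmin : ∀ i, ∃ x ∈ σ, ∀ z ∈ σ, x i ≤ z i := fun i =>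
    Finset.exists_min_image σ (fun x => x i) hne
  choose μ hμ hμmin using hmin
  set C := σ.image c with hC
  obtain ⟨x0, hx0⟩ := hne
  have hlow : m < ∑ i ∈ C, (μ i i + 1) := by
    by_contra hcon
    push Not at hcon
    let i1 := c x0
    have hi1 : i1 ∈ C := Finset.mem_image_of_mem _ hx0
    let y : I → ℕ := fun i => (if i ∈ C then μ i i + 1 else 0) +
      (if i = i1 then m - ∑ i ∈ C, (μ i i + 1) else 0)
    obtain ⟨i, hiC, hi⟩ := hdom y (by
      simp only [y, Finset.sum_add_distrib]
      rw [← Finset.sum_filter]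
      simp only [Finset.filter_mem_eq_inter, Finset.univ_inter, Finset.sum_ite_eq',
        Finset.mem_univ, if_true, Finset.sum_add_distrib] at hcon ⊢
      omega)
    have := hi _ (hμ i)
    simp only [y, if_pos hiC] at this
    omega
  rw [Finset.sum_add_distrib, Finset.sum_const, smul_eq_mul, mul_one] at hlow
  have hCc : C.card ≤ Fintype.card I := Finset.card_le_univ C
  have hkey : ∀ x ∈ σ, ∀ i, x i ≤ (if i ∈ C then μ i i else 0) + Fintype.card I := by
    intro x hx i
    have h1 : ∑ i, (if i ∈ C then μ i i else 0) = ∑ i ∈ C, μ i i := by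
      rw [← Finset.sum_filter]; simp
    have h2 : ∀ j, (if j ∈ C then μ j j else 0) ≤ x j := by
      intro j
      split_ifs
      · exact hμmin j x hx
      · exact Nat.zero_le _
    have h3 := hsum x hx
    rw [← Finset.add_sum_erase _ _ (Finset.mem_univ i)] at h1 h3
    have h4 : ∑ j ∈ Finset.univ.erase i, (if j ∈ C then μ j j else 0) ≤
      ∑ j ∈ Finset.univ.erase i, x j := Finset.sum_le_sum fun j _ => h2 j
    omega
  refine ⟨σ, ⟨x0, hx0⟩, hsum, ?_, ?_⟩
  · intro x hx j hj
    have := hkey x hx j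
    rw [if_neg hj] at this
    omega
  · intro x hx x' hx' i
    have := hkey x hx i
    split_ifs at this with h
    · have := hμmin i x' hx'
      omega
    · omega

theorem lebesgue_core {X : Type} [TopologicalSpace X] (φ : (I → ℝ) → X)
    (hφ : Continuous φ) (V : Set (Set X)) (hVo : ∀ v ∈ V, IsOpen v) (hVc : ⋃₀ V = Set.univ)
    (ε : ℝ) (hε : 0 < ε) (hεI : 3 * ε * Fintype.card I < 1) (i0 : I)
    (hsmall : ∀ v ∈ V, ∀ x ∈ stdSimplex ℝ I, ∀ y ∈ stdSimplex ℝ I, φ x ∈ v → φ y ∈ v →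
      ∀ i, x i ≤ y i + ε) :
    ∃ x, (Fintype.card I : ℕ∞) ≤ {v ∈ V | x ∈ v}.encard := by
  classical
  obtain ⟨δ, hδ, hleb⟩ := lebesgue_number_lemma_of_metric_sUnion
    (s := stdSimplex ℝ I) (c := (fun v => φ ⁻¹' v) '' V) (isCompact_stdSimplex ℝ I)
    (by rintro _ ⟨v, hv, rfl⟩; exact (hVo v hv).preimage hφ)
    (by
      intro x _
      have : φ x ∈ ⋃₀ V := by rw [hVc]; trivial
      obtain ⟨v, hv, hx⟩ := this
      exact ⟨_, ⟨v, hv, rfl⟩, hx⟩)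
  have hleb' : ∀ x, ∃ v, x ∈ stdSimplex ℝ I → v ∈ V ∧ Metric.ball x δ ⊆ φ ⁻¹' v := by
    intro x
    by_cases hx : x ∈ stdSimplex ℝ I
    · obtain ⟨_, ⟨v, hv, rfl⟩, h⟩ := hleb x hx
      exact ⟨v, fun _ => ⟨hv, h⟩⟩
    · exact ⟨∅, fun h => absurd h hx⟩
  choose v hv using hleb'
  have hlab : ∀ w : Set X, ∃ i, (∃ j, ∃ z ∈ stdSimplex ℝ I, φ z ∈ w ∧ z j ≤ ε) →
      ∃ z ∈ stdSimplex ℝ I, φ z ∈ w ∧ z i ≤ ε := by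
    intro w
    by_cases h : ∃ j, ∃ z ∈ stdSimplex ℝ I, φ z ∈ w ∧ z j ≤ ε
    · obtain ⟨j, hj⟩ := h
      exact ⟨j, fun _ => hj⟩
    · exact ⟨i0, fun h' => absurd h' h⟩
  choose ℓ hℓ using hlab
  obtain ⟨m0, hm0⟩ := exists_nat_gt ((Fintype.card I : ℝ) / min δ ε)
  have hmin : 0 < min δ ε := lt_min hδ hε
  have hcI : (0 : ℝ) < Fintype.card I := by
    have : 0 < Fintype.card I := Fintype.card_pos_iff.2 ⟨i0⟩
    exact_mod_cast this
  have hm0pos : (0 : ℝ) < m0 := lt_trans (by positivity) hm0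
  have hmm : (Fintype.card I : ℝ) / m0 < min δ ε := by
    rw [div_lt_iff₀ hm0pos]
    rw [div_lt_iff₀ hmin] at hm0
    linarith
  have hmδ : (Fintype.card I : ℝ) / m0 < δ := hmm.trans_le (min_le_left _ _)
  have hmε : (Fintype.card I : ℝ) / m0 < ε := hmm.trans_le (min_le_right _ _)
  let sc : (I → ℕ) → (I → ℝ) := fun x i => (x i : ℝ) / m0
  obtain ⟨σ, ⟨x0, hx0⟩, hsum, hface, hclose⟩ :=
    simplex_color' m0 (fun x => ℓ (v (sc x))) i0
  have hsc : ∀ x ∈ σ, sc x ∈ stdSimplex ℝ I := by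
    intro x hx
    refine ⟨fun i => by simp only [sc]; positivity, ?_⟩
    simp only [sc]
    rw [← Finset.sum_div, ← Nat.cast_sum, hsum x hx]
    exact div_self hm0pos.ne'
  have hself : ∀ x ∈ σ, φ (sc x) ∈ v (sc x) := fun x hx =>
    (hv _ (hsc x hx)).2 (Metric.mem_ball_self hδ)
  have hcl : ∀ x ∈ σ, ∀ x' ∈ σ, ∀ i, sc x i ≤ sc x' i + Fintype.card I / m0 := by
    intro x hx x' hx' i
    simp only [sc]
    rw [← add_div]
    gcongr
    exact_mod_cast hclose x hx x' hx' i
  have hall : ∀ j, j ∈ σ.image (fun x => ℓ (v (sc x))) := by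
    by_contra hcon
    push Not at hcon
    obtain ⟨j, hj⟩ := hcon
    have hfs : ∀ x ∈ σ, ∀ j ∉ σ.image (fun x => ℓ (v (sc x))), sc x j ≤ ε := by
      intro x hx j hj
      refine le_trans ?_ hmε.le
      simp only [sc]
      gcongr
      exact_mod_cast hface x hx j hj
    have hbound : ∀ i, sc x0 i ≤ 3 * ε := by
      intro i
      by_cases hi : i ∈ σ.image (fun x => ℓ (v (sc x)))
      · obtain ⟨x, hx, rfl⟩ := Finset.mem_image.1 hi
        obtain ⟨z, hz, hzv, hzi⟩ := hℓ (v (sc x)) ⟨j, sc x, hsc x hx, hself x hx, hfs x hx j hj⟩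
        have h1 := hsmall _ (hv _ (hsc x hx)).1 _ (hsc x hx) _ hz (hself x hx) hzv (ℓ (v (sc x)))
        have h2 := hcl x0 hx0 x hx (ℓ (v (sc x)))
        linarith
      · have := hfs x0 hx0 i hi
        linarith
    have h1 := (hsc x0 hx0).2
    have h2 : ∑ i, sc x0 i ≤ ∑ _i : I, 3 * ε := Finset.sum_le_sum fun i _ => hbound i
    rw [h1, Finset.sum_const, Finset.card_univ, nsmul_eq_mul] at h2
    linarith
  refine ⟨φ (sc x0), ?_⟩
  have hch : ∀ i, ∃ x ∈ σ, ℓ (v (sc x)) = i := fun i => Finset.mem_image.1 (hall i)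
  choose p hp hpi using hch
  have hinj : Function.Injective fun i => v (sc (p i)) := by
    intro i j h
    rw [← hpi i, ← hpi j]
    exact congrArg ℓ h
  have hsub : Set.range (fun i => v (sc (p i))) ⊆ {w ∈ V | φ (sc x0) ∈ w} := by
    rintro _ ⟨i, rfl⟩
    refine ⟨(hv _ (hsc _ (hp i))).1, (hv _ (hsc _ (hp i))).2 ?_⟩
    rw [Metric.mem_ball, dist_pi_lt_iff hδ]
    intro k
    rw [Real.dist_eq, abs_lt]
    have h1 := hcl x0 hx0 _ (hp i) k
    have h2 := hcl _ (hp i) x0 hx0 k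
    constructor <;> linarith
  refine le_trans ?_ (Set.encard_le_encard hsub)
  rw [← Set.image_univ, hinj.encard_image, Set.encard_univ]
  simp

end Simplex

section Upper

theorem covDimLE_of_pieces {X : Type*} [TopologicalSpace X] [SecondCountableTopology X] (N : ℕ)
    (Z : Fin (N + 1) → Set X) (hZ : ∀ x, ∃ k, x ∈ Z k)
    (hb : ∀ k, ∀ x ∈ Z k, ∀ u : Set X, IsOpen u → x ∈ u → ∃ O O' : Set X, IsOpen O ∧
      IsClosed O' ∧ x ∈ O ∧ O ⊆ u ∧ O ⊆ O' ∧ Z k ∩ O' ⊆ O) : CovDimLE X N := by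
  classical
  intro U hUo hUc
  have hk : ∀ k, ∃ W : ℕ → Set X, (∀ i, IsOpen (W i)) ∧ (∀ x ∈ Z k, ∃ i, x ∈ W i) ∧
      (∀ i, (W i).Nonempty → ∃ u ∈ U, W i ⊆ u) ∧ ∀ i j x, x ∈ W i → x ∈ W j → i = j := by
    intro k
    rcases (Z k).eq_empty_or_nonempty with hempty | ⟨z0, hz0⟩
    · exact ⟨fun _ => ∅, by simp [hempty]⟩
    have h1 : ∀ x : Z k, ∃ O O' : Set X, IsOpen O ∧ IsClosed O' ∧ x.1 ∈ O ∧ (∃ u ∈ U, O ⊆ u) ∧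
        O ⊆ O' ∧ Z k ∩ O' ⊆ O := by
      rintro ⟨x, hx⟩
      have : x ∈ ⋃₀ U := by rw [hUc]; trivial
      obtain ⟨u, hu, hxu⟩ := this
      obtain ⟨O, O', h1, h2, h3, h4, h5, h6⟩ := hb k x hx u (hUo u hu) hxu
      exact ⟨O, O', h1, h2, h3, ⟨u, hu, h4⟩, h5, h6⟩
    choose O O' hO hO' hmem hsub hOO' hZO using h1
    obtain ⟨S, hS, hSU⟩ := TopologicalSpace.isOpen_iUnion_countable O hO
    have hcov : ∀ x ∈ Z k, ∃ s ∈ S, x ∈ O s := by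
      intro x hx
      have : x ∈ ⋃ i ∈ S, O i := by
        rw [hSU]
        exact Set.mem_iUnion.2 ⟨⟨x, hx⟩, hmem ⟨x, hx⟩⟩
      simpa using this
    obtain ⟨s0, hs0, -⟩ := hcov z0 hz0
    obtain ⟨f, rfl⟩ := hS.exists_eq_range ⟨s0, hs0⟩
    refine ⟨fun i => O (f i) \ ⋃ j ∈ Finset.range i, O' (f j), ?_, ?_, ?_, ?_⟩
    · intro i
      refine (hO _).sdiff ?_
      exact Set.Finite.isClosed_biUnion (Finset.finite_toSet _) fun j _ => hO' _
    · intro x hx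
      have hex : ∃ i, x ∈ O (f i) := by
        obtain ⟨_, ⟨i, rfl⟩, h⟩ := hcov x hx
        exact ⟨i, h⟩
      refine ⟨Nat.find hex, Nat.find_spec hex, ?_⟩
      intro hcon
      simp only [Set.mem_iUnion, Finset.mem_range] at hcon
      obtain ⟨j, hj, hxj⟩ := hcon
      exact Nat.find_min hex hj (hZO _ ⟨hx, hxj⟩)
    · intro i _
      obtain ⟨u, hu, h⟩ := hsub (f i)
      exact ⟨u, hu, Set.sdiff_subset.trans h⟩
    · have key : ∀ i j x, i < j → x ∈ O (f i) \ ⋃ j ∈ Finset.range i, O' (f j) →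
          x ∈ O (f j) \ ⋃ l ∈ Finset.range j, O' (f l) → False := by
        intro i j x hij hi hj
        apply hj.2
        simp only [Set.mem_iUnion, Finset.mem_range]
        exact ⟨i, hij, hOO' _ hi.1⟩
      intro i j x hi hj
      rcases lt_trichotomy i j with h | h | h
      · exact (key i j x h hi hj).elim
      · exact h
      · exact (key j i x h hj hi).elim
  choose W hWo hWc hWU hWd using hk
  refine ⟨{v | v.Nonempty ∧ ∃ k i, v = W k i}, ?_, ?_, ?_, ?_⟩
  · rintro v ⟨-, k, i, rfl⟩
    exact hWo k i
  · refine Set.eq_univ_of_forall fun x => ?_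
    obtain ⟨k, hx⟩ := hZ x
    obtain ⟨i, hi⟩ := hWc k x hx
    exact ⟨W k i, ⟨⟨x, hi⟩, k, i, rfl⟩, hi⟩
  · rintro v ⟨hne, k, i, rfl⟩
    exact hWU k i hne
  · intro x
    have hf : ∀ k, ∃ w, ∀ i, x ∈ W k i → W k i = w := by
      intro k
      by_cases h : ∃ i, x ∈ W k i
      · obtain ⟨i, hi⟩ := h
        exact ⟨W k i, fun j hj => by rw [hWd k j i x hj hi]⟩
      · exact ⟨∅, fun i hi => absurd ⟨i, hi⟩ h⟩
    choose g hg using hf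
    have hsub : {v ∈ {v : Set X | v.Nonempty ∧ ∃ k i, v = W k i} | x ∈ v} ⊆ g '' Set.univ := by
      rintro v ⟨⟨-, k, i, rfl⟩, hx⟩
      exact ⟨k, trivial, (hg k i hx).symm⟩
    refine (Set.encard_le_encard hsub).trans ((Set.encard_image_le _ _).trans ?_)
    simp [Set.encard_univ]

end Upper

section GHx

open GromovHausdorff

theorem gh_exists_equiv {X Y : Type} [MetricSpace X] [CompactSpace X] [Nonempty X] [Finite X]
    [MetricSpace Y] [CompactSpace Y] [Nonempty Y] [Finite Y] (hc : Nat.card X = Nat.card Y)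
    (δ : ℝ) (h : ghDist X Y < δ) (hsep : ∀ x y : X, x ≠ y → 2 * δ ≤ dist x y) :
    ∃ e : X ≃ Y, ∀ x y, |dist (e x) (e y) - dist x y| < 2 * δ := by
  obtain ⟨Φ, Ψ, hΦ, hΨ, heq⟩ := ghDist_eq_hausdorffDist X Y
  rw [heq] at h
  have hfin : Metric.hausdorffEDist (Set.range Φ) (Set.range Ψ) ≠ ⊤ :=
    Metric.hausdorffEDist_ne_top_of_nonempty_of_bounded (Set.range_nonempty _)
      (Set.range_nonempty _) (Set.finite_range Φ).isBounded (Set.finite_range Ψ).isBounded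
  have hex : ∀ x, ∃ y, dist (Φ x) (Ψ y) < δ := by
    intro x
    obtain ⟨_, ⟨y, rfl⟩, hy⟩ :=
      Metric.exists_dist_lt_of_hausdorffDist_lt (Set.mem_range_self x) h hfin
    exact ⟨y, hy⟩
  choose f hf using hex
  have hd : ∀ x y, |dist (f x) (f y) - dist x y| < 2 * δ := by
    intro x y
    rw [← hΨ.dist_eq, ← hΦ.dist_eq]
    have h1 := hf x
    have h2 := hf y
    have h3 := dist_triangle4 (Φ x) (Ψ (f x)) (Ψ (f y)) (Φ y)
    have h4 := dist_triangle4 (Ψ (f x)) (Φ x) (Φ y) (Ψ (f y))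
    rw [dist_comm (Ψ (f y)) (Φ y)] at h3
    rw [dist_comm (Ψ (f x)) (Φ x)] at h4
    rw [abs_lt]
    constructor <;> linarith
  have hinj : Function.Injective f := by
    intro x y hxy
    by_contra hne
    have h1 := hsep x y hne
    have h2 := hd x y
    rw [hxy, dist_self, zero_sub, abs_neg, abs_of_nonneg dist_nonneg] at h2
    linarith
  have hbij : Function.Bijective f := (Nat.bijective_iff_injective_and_card f).2 ⟨hinj, hc⟩
  exact ⟨Equiv.ofBijective f hbij, hd⟩

theorem gh_le_of_equiv {X Y : Type} [MetricSpace X] [CompactSpace X] [Nonempty X]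
    [MetricSpace Y] [CompactSpace Y] [Nonempty Y] (e : X ≃ Y) (ε : ℝ)
    (h : ∀ x y, |dist (e x) (e y) - dist x y| ≤ ε) : ghDist X Y ≤ ε / 2 := by
  have := ghDist_le_of_approx_subsets (X := X) (Y := Y) (s := Set.univ) (fun x => e x.1)
    (ε₁ := 0) (ε₂ := ε) (ε₃ := 0) (fun x => ⟨x, trivial, by simp⟩)
    (fun y => ⟨⟨e.symm y, trivial⟩, by simp⟩) (fun x y => by
      rw [abs_sub_comm]; exact h x.1 y.1)
  linarith

theorem exists_pos_le_all {ι : Type*} [Finite ι] (f : ι → ℝ) (hf : ∀ i, 0 < f i) :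
    ∃ δ > 0, ∀ i, δ ≤ f i := by
  rcases isEmpty_or_nonempty ι with h | h
  · exact ⟨1, one_pos, fun i => (h.false i).elim⟩
  · obtain ⟨i, hi⟩ := Finite.exists_min f
    exact ⟨f i, hf i, hi⟩

abbrev GHn (n : ℕ) : Type := ↥{p : GHSpace | Nat.card p.Rep = n}

theorem GHn.finite {n : ℕ} (hn : 1 ≤ n) (p : GHn n) : Finite p.1.Rep :=
  Nat.finite_of_card_ne_zero (by rw [p.2]; omega)

theorem GHn.key {n : ℕ} (hn : 1 ≤ n) (q : GHn n) (η : ℝ) (hη : 0 < η) :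
    ∃ δ > 0, ∀ q' : GHn n, dist q' q < δ → ∃ e : q.1.Rep ≃ q'.1.Rep,
      ∀ i j, |dist (e i) (e j) - dist i j| < η := by
  classical
  have := GHn.finite hn q
  obtain ⟨δ, hδ, hle⟩ := exists_pos_le_all
    (fun p : q.1.Rep × q.1.Rep => if p.1 = p.2 then (1 : ℝ) else dist p.1 p.2) (by
      rintro ⟨a, b⟩
      dsimp only
      split_ifs with h
      · exact one_pos
      · exact dist_pos.2 h)
  refine ⟨min δ η / 2, by positivity, fun q' hq' => ?_⟩
  have := GHn.finite hn q'
  have hd : ghDist q.1.Rep q'.1.Rep < min δ η / 2 := by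
    rw [← dist_ghDist, dist_comm]; exact hq'
  obtain ⟨e, he⟩ := gh_exists_equiv (by rw [q.2, q'.2]) _ hd (by
    intro x y hxy
    have := hle (x, y)
    simp only [if_neg hxy] at this
    have := min_le_left δ η
    linarith)
  refine ⟨e, fun i j => (he i j).trans_le ?_⟩
  have := min_le_right δ η
  linarith

/-- Pairwise disjoint dense subsets of the line. -/
def DD (k : ℕ) : Set ℝ := {x | ∃ q : ℚ, x = q + k * Real.sqrt 2}

theorem DD_dense (k : ℕ) (a b : ℝ) (h : a < b) : ∃ x ∈ DD k, a < x ∧ x < b := by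
  obtain ⟨q, h1, h2⟩ := exists_rat_btwn (sub_lt_sub_right h (k * Real.sqrt 2))
  exact ⟨q + k * Real.sqrt 2, ⟨q, rfl⟩, by linarith, by linarith⟩

theorem DD_disj (k l : ℕ) (x : ℝ) (hk : x ∈ DD k) (hl : x ∈ DD l) : k = l := by
  obtain ⟨q, rfl⟩ := hk
  obtain ⟨r, hr⟩ := hl
  by_contra hne
  have hne' : ((k : ℝ) - l) ≠ 0 := by
    rw [sub_ne_zero]; exact_mod_cast hne
  have h1 : Real.sqrt 2 = ((r - q) / ((k : ℚ) - l) : ℚ) := by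
    push_cast
    rw [eq_div_iff hne']
    linarith
  exact irrational_sqrt_two ⟨_, h1.symm⟩

theorem GHn.upper (n : ℕ) (hn : 1 ≤ n) : CovDimLE (GHn n) (n.choose 2) := by
  classical
  refine covDimLE_of_pieces _ (fun k => {p | ∀ a b : p.1.Rep, a ≠ b → dist a b ∉ DD k}) ?_ ?_
  · intro p
    by_contra hcon
    simp only [Set.mem_ofPred_eq] at hcon
    push Not at hcon
    choose a b hab hd using hcon
    have := GHn.finite hn p
    let _ := Fintype.ofFinite p.1.Rep
    let F : Fin (n.choose 2 + 1) → {s : Sym2 p.1.Rep // ¬ s.IsDiag} := fun k =>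
      ⟨s(a k, b k), by simpa using hab k⟩
    have hcard : Fintype.card {s : Sym2 p.1.Rep // ¬ s.IsDiag} <
        Fintype.card (Fin (n.choose 2 + 1)) := by
      rw [Sym2.card_subtype_not_diag, ← Nat.card_eq_fintype_card, p.2, Fintype.card_fin]
      omega
    obtain ⟨k, l, hkl, hF⟩ := Fintype.exists_ne_map_eq_of_card_lt F hcard
    have hs : s(a k, b k) = s(a l, b l) := congrArg Subtype.val hF
    have hdist : dist (a k) (b k) = dist (a l) (b l) := by
      rcases Sym2.eq_iff.1 hs with ⟨h1, h2⟩ | ⟨h1, h2⟩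
      · rw [h1, h2]
      · rw [h1, h2, dist_comm]
    exact hkl (Fin.ext (DD_disj _ _ _ (hd k) (hdist ▸ hd l)))
  · intro k p hp u hu hpu
    have := GHn.finite hn p
    obtain ⟨ρ, hρ, hball⟩ := Metric.isOpen_iff.1 hu p hpu
    have ha : ∀ i j : p.1.Rep, ∃ x ∈ DD k, dist i j - ρ < x ∧ x < dist i j := fun i j =>
      DD_dense k _ _ (by linarith)
    have hb : ∀ i j : p.1.Rep, ∃ x ∈ DD k, dist i j < x ∧ x < dist i j + ρ := fun i j =>
      DD_dense k _ _ (by linarith)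
    choose a haD ha1 ha2 using ha
    choose b hbD hb1 hb2 using hb
    refine ⟨{q | ∃ e : p.1.Rep ≃ q.1.Rep, ∀ i j, i ≠ j →
        a i j < dist (e i) (e j) ∧ dist (e i) (e j) < b i j},
      {q | ∃ e : p.1.Rep ≃ q.1.Rep, ∀ i j, i ≠ j →
        a i j ≤ dist (e i) (e j) ∧ dist (e i) (e j) ≤ b i j}, ?_, ?_, ?_, ?_, ?_, ?_⟩
    · rw [Metric.isOpen_iff]
      rintro q ⟨e, he⟩
      obtain ⟨η, hη, hle⟩ := exists_pos_le_all (fun x : p.1.Rep × p.1.Rep =>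
        if x.1 = x.2 then (1 : ℝ) else min (dist (e x.1) (e x.2) - a x.1 x.2)
          (b x.1 x.2 - dist (e x.1) (e x.2))) (by
          rintro ⟨i, j⟩
          dsimp only
          split_ifs with h
          · exact one_pos
          · have := he i j h
            exact lt_min (by linarith) (by linarith))
      obtain ⟨δ, hδ, hkey⟩ := GHn.key hn q η hη
      refine ⟨δ, hδ, fun q' hq' => ?_⟩
      obtain ⟨f, hf⟩ := hkey q' hq'
      refine ⟨e.trans f, fun i j hij => ?_⟩
      have h1 := hle (i, j)
      simp only [if_neg hij] at h1
      have h2 := abs_lt.1 (hf (e i) (e j))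
      have h3 := h1.trans (min_le_left _ _)
      have h4 := h1.trans (min_le_right _ _)
      simp only [Equiv.trans_apply]
      constructor <;> linarith
    · rw [← isOpen_compl_iff, Metric.isOpen_iff]
      intro q hq
      have := GHn.finite hn q
      simp only [Set.mem_compl_iff, Set.mem_ofPred_eq] at hq
      have hviol : ∀ e : p.1.Rep ≃ q.1.Rep, ∃ η > 0, ∃ i j, i ≠ j ∧
          (dist (e i) (e j) + η ≤ a i j ∨ b i j + η ≤ dist (e i) (e j)) := by
        intro e
        by_contra hcon
        push Not at hcon
        refine hq ⟨e, fun i j hij => ⟨?_, ?_⟩⟩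
        · by_contra hlt
          push Not at hlt
          have := (hcon (a i j - dist (e i) (e j)) (by linarith) i j hij).1
          linarith
        · by_contra hlt
          push Not at hlt
          have := (hcon (dist (e i) (e j) - b i j) (by linarith) i j hij).2
          linarith
      choose g hg hg2 using hviol
      obtain ⟨η, hη, hle⟩ := exists_pos_le_all g hg
      obtain ⟨δ, hδ, hkey⟩ := GHn.key hn q η hη
      refine ⟨δ, hδ, fun q' hq' => ?_⟩
      obtain ⟨f, hf⟩ := hkey q' hq'
      rintro ⟨e', he'⟩
      obtain ⟨i, j, hij, hv⟩ := hg2 (e'.trans f.symm)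
      have h1 := hle (e'.trans f.symm)
      have h2 := abs_lt.1 (hf ((e'.trans f.symm) i) ((e'.trans f.symm) j))
      have h3 := he' i j hij
      simp only [Equiv.trans_apply, Equiv.apply_symm_apply] at h1 h2 hv
      rcases hv with hv | hv <;> linarith [h2.1, h2.2, h3.1, h3.2]
    · exact ⟨Equiv.refl _, fun i j _ => ⟨ha2 i j, hb1 i j⟩⟩
    · rintro q ⟨e, he⟩
      apply hball
      have : ghDist p.1.Rep q.1.Rep ≤ ρ / 2 := by
        refine gh_le_of_equiv e ρ fun i j => ?_
        by_cases hij : i = j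
        · simp [hij, hρ.le]
        · have h1 := he i j hij
          have h2 := ha1 i j
          have h3 := hb2 i j
          rw [abs_le]
          constructor <;> linarith
      rw [← dist_ghDist, dist_comm] at this
      rw [Metric.mem_ball]
      refine lt_of_le_of_lt this ?_
      linarith
    · rintro q ⟨e, he⟩
      exact ⟨e, fun i j hij => ⟨(he i j hij).1.le, (he i j hij).2.le⟩⟩
    · rintro q ⟨hqZ, e, he⟩
      refine ⟨e, fun i j hij => ?_⟩
      have hne : e i ≠ e j := fun h => hij (e.injective h)
      have h1 := hqZ _ _ hne
      refine ⟨lt_of_le_of_ne (he i j hij).1 ?_, lt_of_le_of_ne (he i j hij).2 ?_⟩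
      · intro h
        exact h1 (h ▸ haD i j)
      · intro h
        exact h1 (h ▸ hbD i j)

/-- Index set of unordered pairs. -/
abbrev Prs (n : ℕ) : Type := {s : Sym2 (Fin n) // ¬ s.IsDiag}

/-- Truncation to the unit interval. -/
noncomputable def clp (x : ℝ) : ℝ := max 0 (min 1 x)

theorem clp_nonneg (x : ℝ) : 0 ≤ clp x := le_max_left _ _

theorem clp_le_one (x : ℝ) : clp x ≤ 1 := max_le zero_le_one (min_le_left _ _)

theorem clp_eq {x : ℝ} (h0 : 0 ≤ x) (h1 : x ≤ 1) : clp x = x := by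
  rw [clp, min_eq_right h1, max_eq_right h0]

theorem clp_abs_sub (x y : ℝ) : |clp x - clp y| ≤ |x - y| := by
  unfold clp
  refine (abs_max_sub_max_le_max _ _ _ _).trans ?_
  rw [sub_self, abs_zero]
  refine max_le (abs_nonneg _) ?_
  refine (abs_min_sub_min_le_max _ _ _ _).trans ?_
  rw [sub_self, abs_zero]
  exact max_le (abs_nonneg _) le_rfl

/-- The prescribed distance of a pair. -/
noncomputable def pv (n : ℕ) (t : Option (Prs n) → ℝ) (p : Prs n) : ℝ :=
  (2 * Fintype.card (Prs n) + 1) + 2 * ((Fintype.equivFin (Prs n) p : ℕ) : ℝ) + clp (t (some p))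

theorem pv_lb (n : ℕ) (t : Option (Prs n) → ℝ) (p : Prs n) :
    (2 * Fintype.card (Prs n) + 1 : ℝ) ≤ pv n t p := by
  unfold pv
  have := clp_nonneg (t (some p))
  have h2 : (0 : ℝ) ≤ ((Fintype.equivFin (Prs n) p : ℕ) : ℝ) := by positivity
  linarith

theorem pv_ub (n : ℕ) (t : Option (Prs n) → ℝ) (p : Prs n) :
    pv n t p ≤ 2 * (2 * Fintype.card (Prs n) + 1 : ℝ) := by
  unfold pv
  have := clp_le_one (t (some p))
  have h2 : ((Fintype.equivFin (Prs n) p : ℕ) : ℝ) ≤ Fintype.card (Prs n) := by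
    exact_mod_cast (Fintype.equivFin (Prs n) p).2.le
  linarith

/-- Fin n with the prescribed distances. -/
@[ext]
structure MFin (n : ℕ) (t : Option (Prs n) → ℝ) : Type where
  /-- the underlying label -/
  lab : Fin n

/-- Labels are in bijection with points. -/
def MFin.eqv (n : ℕ) (t : Option (Prs n) → ℝ) : MFin n t ≃ Fin n where
  toFun := MFin.lab
  invFun := MFin.mk
  left_inv _ := rfl
  right_inv _ := rfl

/-- The distance function. -/
noncomputable def md (n : ℕ) (t : Option (Prs n) → ℝ) (i j : Fin n) : ℝ :=
  if h : i = j then 0 else pv n t ⟨s(i, j), by simpa using h⟩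

theorem md_self (n : ℕ) (t : Option (Prs n) → ℝ) (i : Fin n) : md n t i i = 0 := by simp [md]

theorem md_of_ne (n : ℕ) (t : Option (Prs n) → ℝ) (i j : Fin n) (h : i ≠ j) :
    md n t i j = pv n t ⟨s(i, j), by simpa using h⟩ := by simp [md, h]

theorem md_comm (n : ℕ) (t : Option (Prs n) → ℝ) (i j : Fin n) : md n t i j = md n t j i := by
  by_cases h : i = j
  · rw [h]
  · rw [md_of_ne _ _ _ _ h, md_of_ne _ _ _ _ (Ne.symm h)]
    congr 1
    exact Subtype.ext Sym2.eq_swap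

theorem md_lb (n : ℕ) (t : Option (Prs n) → ℝ) (i j : Fin n) (h : i ≠ j) :
    (2 * Fintype.card (Prs n) + 1 : ℝ) ≤ md n t i j := by
  rw [md_of_ne _ _ _ _ h]
  exact pv_lb _ _ _

theorem md_nonneg (n : ℕ) (t : Option (Prs n) → ℝ) (i j : Fin n) : 0 ≤ md n t i j := by
  by_cases h : i = j
  · rw [h, md_self]
  · exact le_trans (by positivity) (md_lb n t i j h)

theorem md_triangle (n : ℕ) (t : Option (Prs n) → ℝ) (i j k : Fin n) :
    md n t i k ≤ md n t i j + md n t j k := by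
  by_cases h1 : i = j
  · rw [h1, md_self, zero_add]
  by_cases h2 : j = k
  · rw [h2, md_self, add_zero]
  have h3 := md_lb n t i j h1
  have h4 := md_lb n t j k h2
  by_cases h5 : i = k
  · rw [h5, md_self]
    exact add_nonneg (md_nonneg _ _ _ _) (md_nonneg _ _ _ _)
  · rw [md_of_ne _ _ _ _ h5]
    have := pv_ub n t ⟨s(i, k), by simpa using h5⟩
    linarith

theorem md_eq_zero (n : ℕ) (t : Option (Prs n) → ℝ) (i j : Fin n) (h : md n t i j = 0) :
    i = j := by
  by_contra hne
  have h1 := md_lb n t i j hne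
  have h3 : (0 : ℝ) < 2 * Fintype.card (Prs n) + 1 := by positivity
  linarith

noncomputable instance (n : ℕ) (t : Option (Prs n) → ℝ) : MetricSpace (MFin n t) where
  dist i j := md n t i.lab j.lab
  dist_self i := md_self n t i.lab
  dist_comm i j := md_comm n t i.lab j.lab
  dist_triangle i j k := md_triangle n t i.lab j.lab k.lab
  eq_of_dist_eq_zero := fun {i j} h => MFin.ext (md_eq_zero n t i.lab j.lab h)

theorem MFin.dist_def (n : ℕ) (t : Option (Prs n) → ℝ) (i j : MFin n t) :
    dist i j = md n t i.lab j.lab := rfl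

instance (n : ℕ) (t : Option (Prs n) → ℝ) : Finite (MFin n t) := Finite.of_equiv _ (MFin.eqv n t).symm

instance (n : ℕ) [NeZero n] (t : Option (Prs n) → ℝ) : Nonempty (MFin n t) := ⟨⟨0⟩⟩

theorem MFin.card (n : ℕ) (t : Option (Prs n) → ℝ) : Nat.card (MFin n t) = n :=
  (Nat.card_congr (MFin.eqv n t)).trans (Nat.card_fin n)

/-- The simplex of generic metrics. -/
noncomputable def phi (n : ℕ) [NeZero n] (t : Option (Prs n) → ℝ) : GHn n :=
  ⟨toGHSpace (MFin n t), by
    have h := (toGHSpace (MFin n t)).toGHSpace_rep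
    obtain ⟨e⟩ := toGHSpace_eq_toGHSpace_iff_isometryEquiv.1 h
    exact (Nat.card_congr e.toEquiv).trans (MFin.card n t)⟩

theorem phi_dist (n : ℕ) [NeZero n] (t t' : Option (Prs n) → ℝ) :
    dist (phi n t) (phi n t') = ghDist (MFin n t) (MFin n t') := rfl

theorem phi_continuous (n : ℕ) [NeZero n] : Continuous (phi n) := by
  refine (LipschitzWith.of_dist_le_mul (K := 1) fun t t' => ?_).continuous
  rw [phi_dist, NNReal.coe_one, one_mul]
  have : ghDist (MFin n t) (MFin n t') ≤ dist t t' / 2 := by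
    refine gh_le_of_equiv ((MFin.eqv n t).trans (MFin.eqv n t').symm) _ ?_
    rintro ⟨i⟩ ⟨j⟩
    change |md n t' i j - md n t i j| ≤ _
    by_cases h : i = j
    · rw [h, md_self, md_self]; simp
    · rw [md_of_ne _ _ _ _ h, md_of_ne _ _ _ _ h]
      unfold pv
      rw [add_sub_add_left_eq_sub]
      refine (clp_abs_sub _ _).trans ?_
      rw [← Real.dist_eq, dist_comm]
      exact dist_le_pi_dist _ _ _
  have h0 : 0 ≤ dist t t' := dist_nonneg
  linarith

theorem phi_anti (n : ℕ) [NeZero n] (t t' : Option (Prs n) → ℝ) (δ : ℝ) (hδ' : 4 * δ ≤ 1)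
    (h : dist (phi n t) (phi n t') < δ) (p : Prs n) :
    |clp (t' (some p)) - clp (t (some p))| < 2 * δ := by
  rw [phi_dist] at h
  obtain ⟨e, he⟩ := gh_exists_equiv (by rw [MFin.card, MFin.card]) δ h (by
    intro x y hxy
    have := md_lb n t x.lab y.lab fun hh => hxy (MFin.ext hh)
    rw [MFin.dist_def]
    have h3 : (0 : ℝ) ≤ 2 * Fintype.card (Prs n) := by positivity
    linarith)
  obtain ⟨s, hs⟩ := p
  induction s using Sym2.ind with
  | _ i j =>
    have hij : i ≠ j := by simpa using hs
    have hne : (e ⟨i⟩).lab ≠ (e ⟨j⟩).lab := fun hh =>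
      hij (congrArg MFin.lab (e.injective (MFin.ext hh)))
    have h1 : |md n t' (e ⟨i⟩).lab (e ⟨j⟩).lab - md n t i j| < 2 * δ := he ⟨i⟩ ⟨j⟩
    rw [md_of_ne _ _ _ _ hij, md_of_ne _ _ _ _ hne] at h1
    set p' : Prs n := ⟨s((e ⟨i⟩).lab, (e ⟨j⟩).lab), by simpa using hne⟩
    set p : Prs n := ⟨s(i, j), hs⟩
    have hpp : p' = p := by
      apply (Fintype.equivFin (Prs n)).injective
      apply Fin.ext
      unfold pv at h1
      have a1 := clp_nonneg (t (some p))
      have a2 := clp_le_one (t (some p))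
      have a3 := clp_nonneg (t' (some p'))
      have a4 := clp_le_one (t' (some p'))
      rw [abs_lt] at h1
      obtain ⟨h1, h2⟩ := h1
      have b1 : ((Fintype.equivFin (Prs n) p' : ℕ) : ℝ) <
          ((Fintype.equivFin (Prs n) p : ℕ) : ℝ) + 1 := by linarith
      have b2 : ((Fintype.equivFin (Prs n) p : ℕ) : ℝ) <
          ((Fintype.equivFin (Prs n) p' : ℕ) : ℝ) + 1 := by linarith
      have c1 : (Fintype.equivFin (Prs n) p' : ℕ) < (Fintype.equivFin (Prs n) p : ℕ) + 1 := by
        exact_mod_cast b1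
      have c2 : (Fintype.equivFin (Prs n) p : ℕ) < (Fintype.equivFin (Prs n) p' : ℕ) + 1 := by
        exact_mod_cast b2
      omega
    rw [hpp] at h1
    unfold pv at h1
    rwa [add_sub_add_left_eq_sub] at h1

theorem GHn.lower (n : ℕ) (hn : 1 ≤ n) (k : ℕ) (hk : CovDimLE (GHn n) k) :
    n.choose 2 ≤ k := by
  classical
  have : NeZero n := ⟨by omega⟩
  set c : ℝ := (Fintype.card (Option (Prs n)) : ℝ) with hc
  have hcP : c = Fintype.card (Prs n) + 1 := by
    rw [hc, Fintype.card_option]; push_cast; ring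
  have hc1 : 1 ≤ c := by
    rw [hcP]
    have : (0 : ℝ) ≤ Fintype.card (Prs n) := by positivity
    linarith
  have hc0 : 0 < c := by linarith
  set ε : ℝ := 1 / (4 * c) with hε
  have hεpos : 0 < ε := by positivity
  have hεc : ε * c = 1 / 4 := by rw [hε]; field_simp
  have hεle : ε ≤ 1 / 4 := by nlinarith
  set ρ : ℝ := ε / (4 * c) with hρ
  have hρpos : 0 < ρ := by positivity
  have hρc : 4 * ρ * c = ε := by rw [hρ]; field_simp
  have hρle : 4 * ρ ≤ ε := by nlinarith
  obtain ⟨V, hVo, hVc, hVU, hVm⟩ := hk (Set.range fun p : GHn n => Metric.ball p ρ)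
    (by rintro _ ⟨p, rfl⟩; exact Metric.isOpen_ball)
    (Set.eq_univ_of_forall fun p => ⟨_, ⟨p, rfl⟩, Metric.mem_ball_self hρpos⟩)
  have hsmall : ∀ v ∈ V, ∀ x ∈ stdSimplex ℝ (Option (Prs n)), ∀ y ∈ stdSimplex ℝ (Option (Prs n)),
      phi n x ∈ v → phi n y ∈ v → ∀ i, x i ≤ y i + ε := by
    intro v hv x hx y hy hxv hyv i
    obtain ⟨_, ⟨p, rfl⟩, hp⟩ := hVU v hv
    have h1 := Metric.mem_ball.1 (hp hxv)
    have h2 := Metric.mem_ball'.1 (hp hyv)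
    have h3 : dist (phi n x) (phi n y) < 2 * ρ := by
      have := dist_triangle (phi n x) p (phi n y)
      linarith
    have hle1 : ∀ z ∈ stdSimplex ℝ (Option (Prs n)), ∀ i, clp (z i) = z i := by
      intro z hz i
      refine clp_eq (hz.1 i) ?_
      rw [← hz.2]
      exact Finset.single_le_sum (fun j _ => hz.1 j) (Finset.mem_univ i)
    have h4 : ∀ q : Prs n, |y (some q) - x (some q)| < 4 * ρ := by
      intro q
      have := phi_anti n x y (2 * ρ) (by linarith) h3 q
      rw [hle1 x hx, hle1 y hy] at this
      linarith
    cases i with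
    | some q =>
      have := abs_lt.1 (h4 q)
      linarith
    | none =>
      have hx2 := hx.2
      have hy2 := hy.2
      rw [Fintype.sum_option] at hx2 hy2
      have h5 : ∑ q, y (some q) ≤ ∑ q : Prs n, (x (some q) + 4 * ρ) :=
        Finset.sum_le_sum fun q _ => by have := abs_lt.1 (h4 q); linarith
      rw [Finset.sum_add_distrib, Finset.sum_const, Finset.card_univ, nsmul_eq_mul] at h5
      have h6 : (Fintype.card (Prs n) : ℝ) * (4 * ρ) ≤ ε := by
        have : (Fintype.card (Prs n) : ℝ) = c - 1 := by linarith
        rw [this]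
        nlinarith
      linarith
  obtain ⟨x, hx⟩ := lebesgue_core (phi n) (phi_continuous n) V hVo hVc ε hεpos
    (by rw [← hc]; linarith) none hsmall
  have h1 := hx.trans (hVm x)
  rw [Fintype.card_option, Sym2.card_subtype_not_diag, Fintype.card_fin] at h1
  have h2 : n.choose 2 + 1 ≤ k + 1 := by exact_mod_cast h1
  omega

end GHx

/-- The space `GH_{=n}` of isometry classes of `n`-point metric spaces with the
Gromov-Hausdorff distance has covering dimension `n(n-1)/2`. -/
theorem stmt14 (n : ℕ) (hn : 1 ≤ n) :
    covDim ↥{p : GromovHausdorff.GHSpace | Nat.card p.Rep = n} =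
      (↑(n * (n - 1) / 2) : ℕ∞) := by
  rw [← Nat.choose_two_right]
  refine le_antisymm (sInf_le ⟨_, rfl, GHn.upper n hn⟩) (le_sInf ?_)
  rintro m ⟨k, rfl, hk⟩
  exact_mod_cast GHn.lower n hn k hk
end
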